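/- Let γ > 0 and let u be a decaying classical solution of the Ostrovsky–Hunter equation on the line on [0,T) with initial data u₀ ∈ L¹(ℝ) ∩ L²(ℝ) ∩ L∞(ℝ), with v(t,x) = ∫_{−∞}^x u(t,y) dy square-integrable and v(t,±∞) = 0, and set Q = ∫_ℝ u₀² dx, E = ∫_ℝ [ γ (∫_{−∞}^x u₀)² + (1/3) u₀³ ] dx, and C = (√γ/√2) ( E + γ Q + (1/3) Q ‖u₀‖_{L∞} )^{1/2}. Then sup_{s∈[0,t]} sup_{x∈ℝ} |u(s,x)| ≤ ‖u₀‖_{L∞} + C t + (γ Q/6) t² for every t ∈ [0,T). -/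

import Mathlib

open MeasureTheory Filter Set intervalIntegral

/-- A decaying classical solution of the Ostrovsky–Hunter equation on the line,
on the set `S` of times (typically `[0,T)`): `u` is continuously differentiable
in `t`, twice continuously differentiable in `x`, integrable in `x` for each
time, and with `v(t,x) = ∫_{-∞}^x u(t,y) dy` the nonlocal equation
`u_t + u u_x = γ v` holds pointwise at positive times of `S`. -/
structure IsLineOHSolution (γ : ℝ) (S : Set ℝ) (u : ℝ → ℝ → ℝ) : Prop where
  diff_t : ∀ t ∈ S, ∀ x : ℝ, DifferentiableAt ℝ (fun s => u s x) t
  diff_x : ∀ t ∈ S, ∀ x : ℝ, DifferentiableAt ℝ (u t) x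
  diff_xx : ∀ t ∈ S, ∀ x : ℝ, DifferentiableAt ℝ (deriv (u t)) x
  cont_u : ContinuousOn (fun p : ℝ × ℝ => u p.1 p.2) (S ×ˢ (Set.univ : Set ℝ))
  cont_ut : ContinuousOn (fun p : ℝ × ℝ => deriv (fun s => u s p.2) p.1)
      (S ×ˢ (Set.univ : Set ℝ))
  cont_ux : ContinuousOn (fun p : ℝ × ℝ => deriv (u p.1) p.2) (S ×ˢ (Set.univ : Set ℝ))
  cont_uxx : ContinuousOn (fun p : ℝ × ℝ => deriv (deriv (u p.1)) p.2)
      (S ×ˢ (Set.univ : Set ℝ))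
  integrable : ∀ t ∈ S, MeasureTheory.Integrable (u t)
  eqn : ∀ t ∈ S, 0 < t → ∀ x : ℝ,
    deriv (fun s => u s x) t + u t x * deriv (u t) x = γ * ∫ y in Set.Iic x, u t y

/-!
Write `v` for the primitive of `u`. Both `Q = ∫ u²` and `E = ∫ γ v² + u³ / 3` are conserved, and
`v² ≤ (∫ v² + Q) / 2`, so `(γ v)²` is bounded by `γ / 2 * (E + γ Q + Q sup |u| / 3)`. Since `u`
changes at the rate `γ v` along characteristics, `m = sup |u|` up to time `t` satisfies
`m ≤ ‖u₀‖ + t √(γ / 2 * (E + γ Q + Q m / 3))`, which is a quadratic inequality for `m`.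

The conservation laws rest on two facts: `v` is bounded locally in time and `u` vanishes at
infinity.

* If `v` is bounded on a time interval, so is the acceleration of the characteristics; as these
  cannot cross before the end of the interval, `u` cannot drop too steeply in `x` at earlier times.
  Since increments of `v` are integrals of `u`, their smallness near infinity forces `u` to vanish
  there.
* If `v` is bounded on a short time interval, it is bounded there by a constant depending only on
  `∫ |u|` and `∫ v²` at the initial time. Baire's theorem gives a relatively open part of the set of
  times near which `v` is unbounded where these two integrals are bounded; the short-time bound,
  restarted from the last bad time, then makes `v` bounded there after all.
* The equation extends to time `0`: increments in `x` of `u_t + u u_x` and `γ v` agree there by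
  continuity, and both functions are square integrable, by Fatou's lemma for the former.
-/

section Characteristics

/-- A velocity field `W` on the strip `[a, b] × ℝ` whose acceleration `∂ₜW + W ∂ₓW` along its own
characteristics is the function `A`, with `|A| ≤ G`. Regularity in space is required at all times,
the time derivative only on `[a, b]`. -/
structure IsBoundedAcceleration (W A : ℝ → ℝ → ℝ) (a b G : ℝ) : Prop where
  le : a ≤ b
  continuous : Continuous fun p : ℝ × ℝ => W p.1 p.2
  continuous_deriv : Continuous fun p : ℝ × ℝ => deriv (W p.1) p.2
  differentiable : ∀ t, Differentiable ℝ (W t)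
  hasDerivWithinAt : ∀ t ∈ Icc a b, ∀ x,
    HasDerivWithinAt (fun s => W s x) (A t x - W t x * deriv (W t) x) (Icc a b) t
  abs_acceleration_le : ∀ t ∈ Icc a b, ∀ x, |A t x| ≤ G

-- The difference quotient in the space variable, written as an average of `∂ₓW`.
lemma exists_continuous_slope {W : ℝ → ℝ → ℝ} (hdiff : ∀ t, Differentiable ℝ (W t))
    (hcont : Continuous fun p : ℝ × ℝ => deriv (W p.1) p.2) (z : ℝ) :
    ∃ B : ℝ × ℝ → ℝ, Continuous B ∧ (∀ t, B (t, z) = deriv (W t) z) ∧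
      ∀ t y, W t y - W t z = B (t, y) * (y - z) := by
  refine ⟨fun p => ∫ θ in (0 : ℝ)..1, deriv (W p.1) (z + θ * (p.2 - z)), ?_, fun t => by simp,
    fun t y => ?_⟩
  · apply continuous_parametric_intervalIntegral_of_continuous'
    exact hcont.comp (f := fun q : (ℝ × ℝ) × ℝ => (q.1.1, z + q.2 * (q.1.2 - z))) (by fun_prop)
  · have hderiv (θ : ℝ) : HasDerivAt (fun θ => W t (z + θ * (y - z)))
        (deriv (W t) (z + θ * (y - z)) * (y - z)) θ :=
      (hdiff t _).hasDerivAt.comp θ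
        (by simpa using ((hasDerivAt_id θ).mul_const (y - z)).const_add z)
    have hint : IntervalIntegrable (fun θ => deriv (W t) (z + θ * (y - z)) * (y - z)) volume 0 1 :=
      ((hcont.comp (f := fun θ : ℝ => (t, z + θ * (y - z))) (by fun_prop)).mul
        continuous_const).intervalIntegrable _ _
    simpa using (integral_eq_sub_of_hasDerivAt (fun θ _ => hderiv θ) hint).symm

lemma hasDerivWithinAt_along_curve {W : ℝ → ℝ → ℝ} (hdiff : ∀ t, Differentiable ℝ (W t))
    (hcont : Continuous fun p : ℝ × ℝ => deriv (W p.1) p.2) {s : Set ℝ} {t X' w : ℝ} {X : ℝ → ℝ}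
    (hX : HasDerivWithinAt X X' s t) (hW : HasDerivWithinAt (fun r => W r (X t)) w s t) :
    HasDerivWithinAt (fun r => W r (X r)) (w + deriv (W t) (X t) * X') s t := by
  obtain ⟨B, hB, hBz, hBslope⟩ := exists_continuous_slope hdiff hcont (X t)
  have hmove : HasDerivWithinAt (fun r => W r (X r) - W r (X t)) (deriv (W t) (X t) * X') s t := by
    have hBX : ContinuousWithinAt (fun r => B (r, X r)) s t :=
      hB.continuousAt.comp_continuousWithinAt (continuousWithinAt_id.prodMk hX.continuousWithinAt)
    rw [hasDerivWithinAt_iff_tendsto_slope] at hX ⊢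
    rw [← hBz t]
    refine ((hBX.mono_left (nhdsWithin_mono _ sdiff_subset)).mul hX).congr fun r => ?_
    simp only [slope, vsub_eq_sub, smul_eq_mul, hBslope]
    ring
  exact (hW.add hmove).congr_of_eventuallyEq (Eventually.of_forall fun r => by simp) (by simp)

lemma exists_lipschitzOnWith_closedBall {W : ℝ → ℝ → ℝ} (hdiff : ∀ t, Differentiable ℝ (W t))
    (hcont : Continuous fun p : ℝ × ℝ => deriv (W p.1) p.2) (a b x R : ℝ) :
    ∃ L, ∀ t ∈ Icc a b, LipschitzOnWith L (W t) (Metric.closedBall x R) := by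
  obtain ⟨L, hL⟩ := (isCompact_Icc.prod (isCompact_closedBall x R)).exists_bound_of_continuousOn
    (s := Icc a b ×ˢ Metric.closedBall x R) hcont.continuousOn
  refine ⟨L.toNNReal, fun t ht => (convex_closedBall x R).lipschitzOnWith_of_nnnorm_deriv_le
    (fun y _ => hdiff t y) fun y hy => ?_⟩
  exact_mod_cast (hL (t, y) ⟨ht, hy⟩).trans (Real.le_coe_toNNReal L)

-- Truncation makes the field bounded, so that the Picard–Lindelöf interval is all of `[a, b]`.
lemma exists_isIntegralCurveOn_projIcc {W : ℝ → ℝ → ℝ} {a b : ℝ} (hab : a ≤ b)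
    (hW : Continuous fun p : ℝ × ℝ => W p.1 p.2) (hdiff : ∀ t, Differentiable ℝ (W t))
    (hcont : Continuous fun p : ℝ × ℝ => deriv (W p.1) p.2) (x : ℝ) {m : ℝ} (hm : -m ≤ m) :
    ∃ X : ℝ → ℝ, X a = x ∧
      IsIntegralCurveOn X (fun t y => (projIcc (-m) m hm (W t y) : ℝ)) (Icc a b) := by
  have hm0 : 0 ≤ m := by linarith
  have hR0 : 0 ≤ m * (b - a) := mul_nonneg hm0 (sub_nonneg.2 hab)
  obtain ⟨L, hL⟩ := exists_lipschitzOnWith_closedBall hdiff hcont a b x (m * (b - a))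
  have hPL : IsPicardLindelof (fun t y => (projIcc (-m) m hm (W t y) : ℝ))
      (tmin := a) (tmax := b) ⟨a, left_mem_Icc.2 hab⟩ x (m * (b - a)).toNNReal 0 m.toNNReal L := by
    refine ⟨fun t ht => ?_, fun y _ => ?_, fun t _ y _ => ?_, ?_⟩
    · rw [Real.coe_toNNReal _ hR0]
      simpa [Function.comp_def] using ((LipschitzWith.subtype_val _).comp
        (LipschitzWith.projIcc hm)).comp_lipschitzOnWith (hL t ht)
    · exact (continuous_subtype_val.comp (continuous_projIcc.comp
        (hW.comp (f := fun t : ℝ => (t, y)) (by fun_prop)))).continuousOn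
    · rw [Real.coe_toNNReal _ hm0, Real.norm_eq_abs]
      exact abs_le.2 (projIcc (-m) m hm (W t y)).2
    · simp [Real.coe_toNNReal _ hm0, Real.coe_toNNReal _ hR0, max_eq_left (sub_nonneg.2 hab)]
  exact hPL.exists_eq_forall_mem_Icc_hasDerivWithinAt₀

namespace IsBoundedAcceleration

variable {W A : ℝ → ℝ → ℝ} {a b G : ℝ}

lemma nonneg (h : IsBoundedAcceleration W A a b G) : 0 ≤ G :=
  (abs_nonneg _).trans (h.abs_acceleration_le a (left_mem_Icc.2 h.le) 0)

lemma hasDerivWithinAt_comp_curve (h : IsBoundedAcceleration W A a b G) {X : ℝ → ℝ} {t X' : ℝ}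
    (ht : t ∈ Icc a b) (hX : HasDerivWithinAt X X' (Icc a b) t) :
    HasDerivWithinAt (fun r => W r (X r)) (A t (X t) + deriv (W t) (X t) * (X' - W t (X t)))
      (Icc a b) t := by
  convert hasDerivWithinAt_along_curve h.differentiable h.continuous_deriv hX
    (h.hasDerivWithinAt t ht (X t)) using 1
  ring

-- As long as `|W| ≤ m` the truncation is invisible, and then `|W|` grows at rate at most `G`.
lemma abs_le_of_isIntegralCurveOn_projIcc (h : IsBoundedAcceleration W A a b G) {X : ℝ → ℝ}
    {m : ℝ} (hm : -m ≤ m) (hGm : |W a (X a)| + (G + 1) * (b - a) ≤ m)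
    (hX : IsIntegralCurveOn X (fun t y => (projIcc (-m) m hm (W t y) : ℝ)) (Icc a b)) :
    ∀ t ∈ Icc a b, |W t (X t)| ≤ m := by
  have hG := h.nonneg
  have hderiv := fun t (ht : t ∈ Icc a b) => h.hasDerivWithinAt_comp_curve ht (hX t ht)
  have hbarrier {t : ℝ} (ht : t ∈ Icc a b) : |W a (X a)| + (G + 1) * (t - a) ≤ m := by
    nlinarith [ht.2]
  have hfence := image_norm_le_of_norm_deriv_right_lt_deriv_boundary
    (B := fun t => |W a (X a)| + (G + 1) * (t - a)) (B' := fun _ => G + 1)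
    (fun t ht => (hderiv t ht).continuousWithinAt)
    (fun t ht => (hderiv t (Ico_subset_Icc_self ht)).mono_of_mem_nhdsWithin
      (Icc_mem_nhdsGE_of_mem ht))
    (by simp)
    (fun t => by
      simpa using (((hasDerivAt_id t).sub_const a).const_mul (G + 1)).const_add |W a (X a)|)
    (fun t ht heq => by
      have ht' := Ico_subset_Icc_self ht
      have hle : |W t (X t)| ≤ m := heq.trans_le (hbarrier ht')
      simp only [projIcc_of_mem hm (abs_le.1 hle)]
      rw [sub_self, mul_zero, add_zero, Real.norm_eq_abs]
      linarith [h.abs_acceleration_le t ht' (X t)])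
  exact fun t ht => (hfence ht).trans (hbarrier ht)

lemma exists_isIntegralCurveOn (h : IsBoundedAcceleration W A a b G) (x : ℝ) :
    ∃ X : ℝ → ℝ, X a = x ∧ IsIntegralCurveOn X W (Icc a b) := by
  have hm : -(|W a x| + (G + 1) * (b - a)) ≤ |W a x| + (G + 1) * (b - a) := by
    have := mul_nonneg (by linarith [h.nonneg] : 0 ≤ G + 1) (sub_nonneg.2 h.le)
    linarith [abs_nonneg (W a x)]
  obtain ⟨X, rfl, hX⟩ := exists_isIntegralCurveOn_projIcc h.le h.continuous h.differentiable
    h.continuous_deriv x hm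
  have hle := h.abs_le_of_isIntegralCurveOn_projIcc hm le_rfl hX
  refine ⟨X, rfl, fun t ht => ?_⟩
  simpa only [projIcc_of_mem hm (abs_le.1 (hle t ht))] using hX t ht

lemma abs_sub_le_of_isIntegralCurveOn (h : IsBoundedAcceleration W A a b G) {X : ℝ → ℝ}
    (hX : IsIntegralCurveOn X W (Icc a b)) {t : ℝ} (ht : t ∈ Icc a b) :
    |W t (X t) - W a (X a)| ≤ G * (t - a) := by
  refine norm_image_sub_le_of_norm_deriv_le_segment' (f := fun r => W r (X r))
    (f' := fun r => A r (X r)) (fun r hr => ?_)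
    (fun r hr => h.abs_acceleration_le r (Ico_subset_Icc_self hr) (X r)) t ht
  simpa using h.hasDerivWithinAt_comp_curve hr (hX r hr)

-- Reversing time turns `W` into `-W` and leaves the acceleration unchanged.
lemma reverse (h : IsBoundedAcceleration W A a b G) :
    IsBoundedAcceleration (fun t x => -W (-t) x) (fun t x => A (-t) x) (-b) (-a) G := by
  have hmem : MapsTo (fun t : ℝ => -t) (Icc (-b) (-a)) (Icc a b) := fun t ht =>
    ⟨by linarith [ht.2], by linarith [ht.1]⟩
  refine ⟨neg_le_neg h.le,
    (h.continuous.comp (f := fun p : ℝ × ℝ => (-p.1, p.2)) (by fun_prop)).neg, ?_,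
    fun t => (h.differentiable (-t)).neg, fun t ht x => ?_,
    fun t ht x => h.abs_acceleration_le (-t) (hmem ht) x⟩
  · simp only [deriv.fun_neg]
    exact (h.continuous_deriv.comp (f := fun p : ℝ × ℝ => (-p.1, p.2)) (by fun_prop)).neg
  · have := ((h.hasDerivWithinAt (-t) (hmem ht) x).comp t
      (hasDerivAt_neg t).hasDerivWithinAt hmem).fun_neg
    simpa [Function.comp_def] using this

lemma exists_abs_sub_le (h : IsBoundedAcceleration W A a b G) (x : ℝ) :
    ∃ y, |W b x - W a y| ≤ G * (b - a) := by
  obtain ⟨X, hXx, hX⟩ := h.reverse.exists_isIntegralCurveOn x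
  have := h.reverse.abs_sub_le_of_isIntegralCurveOn hX (right_mem_Icc.2 h.reverse.le)
  refine ⟨X (-a), ?_⟩
  rw [neg_neg, neg_neg, hXx] at this
  calc |W b x - W a (X (-a))| = |-W a (X (-a)) - -W b x| := by congr 1; ring
    _ ≤ G * (-a - -b) := this
    _ = G * (b - a) := by ring

lemma eqOn_of_isIntegralCurveOn (h : IsBoundedAcceleration W A a b G) {X Y : ℝ → ℝ} {s : ℝ}
    (hX : IsIntegralCurveOn X W (Icc a b)) (hY : IsIntegralCurveOn Y W (Icc a b))
    (hs : s ∈ Icc a b) (hXY : X s = Y s) : EqOn X Y (Icc a s) := by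
  have hsub : Icc a s ⊆ Icc a b := Icc_subset_Icc_right hs.2
  obtain ⟨M, hM⟩ := isCompact_Icc.exists_bound_of_continuousOn hX.continuousOn
  obtain ⟨N, hN⟩ := isCompact_Icc.exists_bound_of_continuousOn hY.continuousOn
  obtain ⟨L, hL⟩ :=
    exists_lipschitzOnWith_closedBall h.differentiable h.continuous_deriv a b 0 (max M N)
  have hderiv {Z : ℝ → ℝ} (hZ : IsIntegralCurveOn Z W (Icc a b)) :
      ∀ t ∈ Ioc a s, HasDerivWithinAt Z (W t (Z t)) (Iic t) t := fun t ht =>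
    ((hZ t (hsub (Ioc_subset_Icc_self ht))).mono hsub).mono_of_mem_nhdsWithin
      (Icc_mem_nhdsLE_of_mem ht)
  exact ODE_solution_unique_of_mem_Icc_left (s := fun _ => Metric.closedBall 0 (max M N))
    (fun t ht => hL t (hsub (Ioc_subset_Icc_self ht)))
    (hX.continuousOn.mono hsub) (hderiv hX)
    (fun t ht => mem_closedBall_zero_iff.2
      ((hM t (hsub (Ioc_subset_Icc_self ht))).trans (le_max_left _ _)))
    (hY.continuousOn.mono hsub) (hderiv hY)
    (fun t ht => mem_closedBall_zero_iff.2
      ((hN t (hsub (Ioc_subset_Icc_self ht))).trans (le_max_right _ _))) hXY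

lemma le_of_isIntegralCurveOn (h : IsBoundedAcceleration W A a b G) {X Y : ℝ → ℝ}
    (hX : IsIntegralCurveOn X W (Icc a b)) (hY : IsIntegralCurveOn Y W (Icc a b))
    (hlt : X a < Y a) : X b ≤ Y b := by
  by_contra! hcross
  obtain ⟨s, hs, hmeet⟩ : (0 : ℝ) ∈ (fun t => X t - Y t) '' Icc a b :=
    intermediate_value_Icc h.le (hX.continuousOn.sub hY.continuousOn)
      ⟨(sub_neg.2 hlt).le, (sub_pos.2 hcross).le⟩
  have := h.eqOn_of_isIntegralCurveOn hX hY hs (sub_eq_zero.1 hmeet) (left_mem_Icc.2 hs.1)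
  exact hlt.ne this

-- Two characteristics issuing from `x < y` must not cross before time `b`.
lemma mul_sub_le (h : IsBoundedAcceleration W A a b G) {x y : ℝ} (hxy : x ≤ y) :
    (b - a) * (W a x - W a y) ≤ (y - x) + 2 * G * (b - a) ^ 2 := by
  have hG := h.nonneg
  rcases hxy.eq_or_lt with rfl | hlt
  · simp only [sub_self, mul_zero, zero_add]
    positivity
  obtain ⟨X, rfl, hX⟩ := h.exists_isIntegralCurveOn x
  obtain ⟨Y, rfl, hY⟩ := h.exists_isIntegralCurveOn y
  have hnoncross : X b ≤ Y b := h.le_of_isIntegralCurveOn hX hY hlt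
  have hderiv : ∀ t ∈ Icc a b, HasDerivWithinAt
      (fun t => (Y t - X t) - (W a (Y a) - W a (X a)) * t)
      ((W t (Y t) - W t (X t)) - (W a (Y a) - W a (X a))) (Icc a b) t := fun t ht =>
    ((hY t ht).sub (hX t ht)).sub
      (by simpa using ((hasDerivAt_id t).const_mul (W a (Y a) - W a (X a))).hasDerivWithinAt)
  have hspread := norm_image_sub_le_of_norm_deriv_le_segment' (C := 2 * G * (b - a)) hderiv
    (fun t ht => by
      have ht' := Ico_subset_Icc_self ht
      have hXt := abs_le.1 (h.abs_sub_le_of_isIntegralCurveOn hX ht')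
      have hYt := abs_le.1 (h.abs_sub_le_of_isIntegralCurveOn hY ht')
      have : G * (t - a) ≤ G * (b - a) :=
        mul_le_mul_of_nonneg_left (by linarith [ht.2]) hG
      rw [Real.norm_eq_abs, abs_le]
      constructor <;> linarith) b (right_mem_Icc.2 h.le)
  have := (abs_le.1 hspread).2
  linarith

end IsBoundedAcceleration

end Characteristics

section Primitive

/-- The primitive `∫_{-∞}^x f` of `f` vanishing at `-∞`; for a solution `u` the paper's `v(t, ·)` is
`antideriv (u t)`. -/
noncomputable def antideriv (f : ℝ → ℝ) (x : ℝ) : ℝ := ∫ y in Iic x, f y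

variable {f : ℝ → ℝ}

lemma abs_antideriv_le (hf : Integrable f) (x : ℝ) : |antideriv f x| ≤ ∫ y, |f y| :=
  abs_integral_le_integral_abs.trans
    (setIntegral_le_integral hf.abs (Eventually.of_forall fun y => abs_nonneg (f y)))

lemma antideriv_sub_antideriv (hf : Integrable f) (x y : ℝ) :
    antideriv f y - antideriv f x = ∫ z in x..y, f z :=
  integral_Iic_sub_Iic hf.integrableOn hf.integrableOn

lemma hasDerivAt_antideriv (hf : Integrable f) (hcont : Continuous f) (x : ℝ) :
    HasDerivAt (antideriv f) (f x) x := by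
  have heq : antideriv f = fun y => antideriv f 0 + ∫ z in (0 : ℝ)..y, f z := by
    ext y
    rw [← antideriv_sub_antideriv hf]
    ring
  rw [heq]
  exact (integral_hasDerivAt_right hf.intervalIntegrable
    (hcont.stronglyMeasurableAtFilter _ _) hcont.continuousAt).const_add _

lemma integrable_antideriv_mul (hf : Integrable f) (hcont : Continuous f) :
    Integrable fun x => antideriv f x * f x :=
  hf.bdd_mul (continuous_iff_continuousAt.2 fun x =>
    (hasDerivAt_antideriv hf hcont x).continuousAt).aestronglyMeasurable
    (Eventually.of_forall fun x => abs_antideriv_le hf x)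

lemma hasDerivAt_antideriv_sq (hf : Integrable f) (hcont : Continuous f) (x : ℝ) :
    HasDerivAt (fun y => antideriv f y ^ 2) (2 * (antideriv f x * f x)) x :=
  ((hasDerivAt_antideriv hf hcont x).fun_pow 2).congr_deriv (by push_cast; ring)

lemma tendsto_antideriv_atTop (hf : Integrable f) (hcont : Continuous f)
    (hsq : Integrable fun x => antideriv f x ^ 2) : Tendsto (antideriv f) atTop (nhds 0) := by
  have hlim := tendsto_zero_of_hasDerivAt_of_integrableOn_Ioi (a := 0)
    (fun x _ => hasDerivAt_antideriv_sq hf hcont x)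
    ((integrable_antideriv_mul hf hcont).const_mul 2).integrableOn hsq.integrableOn
  simpa [Real.sqrt_sq_eq_abs, tendsto_zero_iff_abs_tendsto_zero, Function.comp_def] using hlim.sqrt

lemma tendsto_antideriv_atBot (hf : Integrable f) (hcont : Continuous f)
    (hsq : Integrable fun x => antideriv f x ^ 2) : Tendsto (antideriv f) atBot (nhds 0) := by
  have hlim := tendsto_zero_of_hasDerivAt_of_integrableOn_Iic (a := 0)
    (fun x _ => hasDerivAt_antideriv_sq hf hcont x)
    ((integrable_antideriv_mul hf hcont).const_mul 2).integrableOn hsq.integrableOn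
  simpa [Real.sqrt_sq_eq_abs, tendsto_zero_iff_abs_tendsto_zero, Function.comp_def] using hlim.sqrt

end Primitive

/-- A finite-energy solution of the Ostrovsky–Hunter equation on `[a, b] × ℝ`, up to and including
both end times. The conditions at a single time are imposed for every real `t`, so that they can be
used without membership proofs; a solution known only on `[a, b]` is extended by freezing it outside
(`IsFiniteEnergySolution.exists_slab_extension`). -/
structure IsSlabSolution (γ a b : ℝ) (u : ℝ → ℝ → ℝ) : Prop where
  γ_pos : 0 < γ
  le : a ≤ b
  continuous : Continuous fun p : ℝ × ℝ => u p.1 p.2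
  continuous_deriv : Continuous fun p : ℝ × ℝ => deriv (u p.1) p.2
  continuous_antideriv : Continuous fun p : ℝ × ℝ => antideriv (u p.1) p.2
  differentiable : ∀ t, Differentiable ℝ (u t)
  hasDerivWithinAt : ∀ t ∈ Icc a b, ∀ x, HasDerivWithinAt (fun s => u s x)
    (γ * antideriv (u t) x - u t x * deriv (u t) x) (Icc a b) t
  integrable : ∀ t, Integrable (u t)
  integrable_antideriv_sq : ∀ t, Integrable fun x => antideriv (u t) x ^ 2

namespace IsSlabSolution

variable {γ a b S : ℝ} {u : ℝ → ℝ → ℝ}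

lemma mono (h : IsSlabSolution γ a b u) {a' b' : ℝ} (ha : a ≤ a') (hb : b' ≤ b) (hab : a' ≤ b') :
    IsSlabSolution γ a' b' u :=
  { h with
    le := hab
    hasDerivWithinAt := fun t ht x =>
      (h.hasDerivWithinAt t (Icc_subset_Icc ha hb ht) x).mono (Icc_subset_Icc ha hb) }

lemma left_mem (h : IsSlabSolution γ a b u) : a ∈ Icc a b := left_mem_Icc.2 h.le

lemma right_mem (h : IsSlabSolution γ a b u) : b ∈ Icc a b := right_mem_Icc.2 h.le

lemma continuous_right (h : IsSlabSolution γ a b u) (t : ℝ) : Continuous (u t) :=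
  (h.differentiable t).continuous

lemma hasDerivAt_antideriv (h : IsSlabSolution γ a b u) (t x : ℝ) :
    HasDerivAt (antideriv (u t)) (u t x) x :=
  _root_.hasDerivAt_antideriv (h.integrable t) (h.continuous_right t) x

lemma continuous_antideriv_right (h : IsSlabSolution γ a b u) (t : ℝ) :
    Continuous (antideriv (u t)) :=
  continuous_iff_continuousAt.2 fun x => (h.hasDerivAt_antideriv t x).continuousAt

lemma tendsto_atTop (h : IsSlabSolution γ a b u) (t : ℝ) :
    Tendsto (antideriv (u t)) atTop (nhds 0) :=
  tendsto_antideriv_atTop (h.integrable t) (h.continuous_right t) (h.integrable_antideriv_sq t)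

lemma tendsto_atBot (h : IsSlabSolution γ a b u) (t : ℝ) :
    Tendsto (antideriv (u t)) atBot (nhds 0) :=
  tendsto_antideriv_atBot (h.integrable t) (h.continuous_right t) (h.integrable_antideriv_sq t)

section PointwiseBounds

lemma bound_nonneg (h : IsSlabSolution γ a b u)
    (hS : ∀ t ∈ Icc a b, ∀ x, |antideriv (u t) x| ≤ S) : 0 ≤ S :=
  (abs_nonneg _).trans (hS a h.left_mem 0)

lemma isBoundedAcceleration (h : IsSlabSolution γ a b u)
    (hS : ∀ t ∈ Icc a b, ∀ x, |antideriv (u t) x| ≤ S) :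
    IsBoundedAcceleration u (fun t x => γ * antideriv (u t) x) a b (γ * S) :=
  { h with
    abs_acceleration_le := fun t ht x => by
      rw [abs_mul, abs_of_pos h.γ_pos]
      exact mul_le_mul_of_nonneg_left (hS t ht x) h.γ_pos.le }

lemma abs_le_add (h : IsSlabSolution γ a b u)
    (hS : ∀ t ∈ Icc a b, ∀ x, |antideriv (u t) x| ≤ S) {M : ℝ} (hM : ∀ x, |u a x| ≤ M) {t : ℝ}
    (ht : t ∈ Icc a b) (x : ℝ) : |u t x| ≤ M + γ * S * (t - a) := by
  have hslab := h.mono le_rfl ht.2 ht.1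
  obtain ⟨y, hy⟩ := (hslab.isBoundedAcceleration
    fun r hr => hS r (Icc_subset_Icc_right ht.2 hr)).exists_abs_sub_le x
  have := abs_sub_abs_le_abs_sub (u t x) (u a y)
  linarith [hM y]

lemma sub_le_of_le (h : IsSlabSolution γ a b u)
    (hS : ∀ t ∈ Icc a b, ∀ x, |antideriv (u t) x| ≤ S) {t δ k y z : ℝ} (hat : a ≤ t) (hδ : 0 < δ)
    (hδb : t + δ ≤ b) (hyz : y ≤ z) (hzk : z ≤ y + k) :
    u t y - u t z ≤ k / δ + 2 * (γ * S) * δ := by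
  have hslab := h.mono hat hδb (by linarith)
  have hspread := (hslab.isBoundedAcceleration
    fun r hr => hS r (Icc_subset_Icc hat hδb hr)).mul_sub_le hyz
  rw [add_sub_cancel_left] at hspread
  have hsum : k / δ + 2 * (γ * S) * δ = (k + 2 * (γ * S) * δ ^ 2) / δ := by field_simp
  rw [hsum, le_div_iff₀ hδ]
  linarith

-- By the mean value theorem `u t` takes the value of a difference quotient of its primitive within
-- distance `k` on either side of `x`; `sub_le_of_le` compares that value with `u t x`.
lemma abs_le_of_abs_sub_le (h : IsSlabSolution γ a b u)
    (hS : ∀ t ∈ Icc a b, ∀ x, |antideriv (u t) x| ≤ S) {t δ k x η : ℝ} (hat : a ≤ t) (hδ : 0 < δ)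
    (hδb : t + δ ≤ b) (hk : 0 < k)
    (hright : |antideriv (u t) (x + k) - antideriv (u t) x| ≤ η)
    (hleft : |antideriv (u t) x - antideriv (u t) (x - k)| ≤ η) :
    |u t x| ≤ k / δ + 2 * (γ * S) * δ + η / k := by
  have hmean (y : ℝ) : ∃ c ∈ Ioo y (y + k),
      u t c = (antideriv (u t) (y + k) - antideriv (u t) y) / k := by
    simpa using exists_hasDerivAt_eq_slope (antideriv (u t)) (u t) (lt_add_of_pos_right y hk)
      (h.continuous_antideriv_right t).continuousOn (fun z _ => h.hasDerivAt_antideriv t z)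
  obtain ⟨c, ⟨hxc, hck⟩, hc⟩ := hmean x
  obtain ⟨d, ⟨hkd, hdx⟩, hd⟩ := hmean (x - k)
  rw [sub_add_cancel] at hd hdx
  have huc : u t c ≤ η / k := hc.trans_le (by gcongr; exact (abs_le.1 hright).2)
  have hud : -(η / k) ≤ u t d := by
    rw [hd, ← neg_div]
    gcongr
    exact (abs_le.1 hleft).1
  have hxcle := h.sub_le_of_le hS hat hδ hδb hxc.le hck.le
  have hdxle := h.sub_le_of_le hS hat hδ hδb (k := k) hdx.le (by linarith)
  rw [abs_le]
  constructor <;> linarith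

lemma abs_left_le (h : IsSlabSolution γ a b u) (hS : ∀ t ∈ Icc a b, ∀ x, |antideriv (u t) x| ≤ S)
    (hlt : a < b) {K k : ℝ} (hK : ∀ x, |antideriv (u a) x| ≤ K) (hk : 0 < k) (x : ℝ) :
    |u a x| ≤ k / (b - a) + 2 * (γ * S) * (b - a) + 2 * K / k :=
  h.abs_le_of_abs_sub_le hS le_rfl (sub_pos.2 hlt) (by linarith) hk
    ((abs_sub _ _).trans (by linarith [hK (x + k), hK x]))
    ((abs_sub _ _).trans (by linarith [hK x, hK (x - k)]))

lemma exists_abs_le (h : IsSlabSolution γ a b u) (hS : ∀ t ∈ Icc a b, ∀ x, |antideriv (u t) x| ≤ S)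
    (hlt : a < b) : ∃ M, ∀ t ∈ Icc a b, ∀ x, |u t x| ≤ M := by
  obtain ⟨M, hM⟩ : ∃ M, ∀ x, |u a x| ≤ M :=
    ⟨_, h.abs_left_le hS hlt (hS a h.left_mem) one_pos⟩
  refine ⟨M + γ * S * (b - a), fun t ht x => (h.abs_le_add hS hM ht x).trans ?_⟩
  have := h.γ_pos
  have := h.bound_nonneg hS
  gcongr
  exact ht.2

lemma tendsto_zero_of_tendsto_antideriv (h : IsSlabSolution γ a b u)
    (hS : ∀ t ∈ Icc a b, ∀ x, |antideriv (u t) x| ≤ S) {t : ℝ} (ht : t ∈ Ico a b) {l : Filter ℝ}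
    (hl : ∀ k : ℝ, Tendsto (fun x => x + k) l l) (hv : Tendsto (antideriv (u t)) l (nhds 0)) :
    Tendsto (u t) l (nhds 0) := by
  have := h.bound_nonneg hS
  have := h.γ_pos
  rw [Metric.tendsto_nhds]
  intro ε hε
  obtain ⟨δ, hδ, hδb, hδε⟩ : ∃ δ > 0, t + δ ≤ b ∧ 2 * (γ * S) * δ ≤ ε / 4 := by
    have hsmall : ∀ᶠ δ in nhdsWithin (0 : ℝ) (Ioi 0), 2 * (γ * S) * δ < ε / 4 :=
      nhdsWithin_le_nhds <|
        (by fun_prop : Continuous fun δ => 2 * (γ * S) * δ).continuousAt.eventually_lt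
          continuousAt_const (by simpa using hε)
    obtain ⟨δ, hδε, hδ0, hδb⟩ := (hsmall.and (Ioc_mem_nhdsGT (sub_pos.2 ht.2))).exists
    exact ⟨δ, hδ0, by linarith, hδε.le⟩
  have hk : 0 < ε / 4 * δ := by positivity
  have hdiff :
      Tendsto (fun x => antideriv (u t) (x + ε / 4 * δ) - antideriv (u t) x) l (nhds 0) := by
    simpa using (hv.comp (hl _)).sub hv
  have hη : 0 < ε / 4 * (ε / 4 * δ) := by positivity
  filter_upwards [Metric.tendsto_nhds.1 hdiff _ hη,
    (hl (-(ε / 4 * δ))).eventually (Metric.tendsto_nhds.1 hdiff _ hη)] with x hright hleft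
  rw [Real.dist_eq, sub_zero] at hright hleft ⊢
  rw [neg_add_cancel_right, ← sub_eq_add_neg] at hleft
  have := h.abs_le_of_abs_sub_le hS ht.1 hδ hδb hk hright.le hleft.le
  rw [mul_div_cancel_right₀ _ hδ.ne', mul_div_cancel_right₀ _ hk.ne'] at this
  linarith

lemma tendsto_atTop_zero (h : IsSlabSolution γ a b u)
    (hS : ∀ t ∈ Icc a b, ∀ x, |antideriv (u t) x| ≤ S) {t : ℝ} (ht : t ∈ Ico a b) :
    Tendsto (u t) atTop (nhds 0) :=
  h.tendsto_zero_of_tendsto_antideriv hS ht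
    (fun k => tendsto_atTop_add_const_right _ k tendsto_id) (h.tendsto_atTop t)

lemma tendsto_atBot_zero (h : IsSlabSolution γ a b u)
    (hS : ∀ t ∈ Icc a b, ∀ x, |antideriv (u t) x| ≤ S) {t : ℝ} (ht : t ∈ Ico a b) :
    Tendsto (u t) atBot (nhds 0) :=
  h.tendsto_zero_of_tendsto_antideriv hS ht
    (fun k => tendsto_atBot_add_const_right _ k tendsto_id) (h.tendsto_atBot t)

end PointwiseBounds

end IsSlabSolution

section BalanceLaw

/-- The balance law `∂ₜ g + ∂ₓ J = f` on `[a, b] × ℝ` with density `g`, source `f` and flux `J`,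
whose space derivative is `J'`. -/
structure IsBalanceLaw (a b : ℝ) (g f J J' : ℝ → ℝ → ℝ) : Prop where
  le : a ≤ b
  continuous_source : Continuous fun p : ℝ × ℝ => f p.1 p.2
  continuous_flux : Continuous fun p : ℝ × ℝ => J p.1 p.2
  continuous_flux_deriv : Continuous fun p : ℝ × ℝ => J' p.1 p.2
  hasDerivAt_flux : ∀ t x, HasDerivAt (J t) (J' t x) x
  hasDerivWithinAt : ∀ t ∈ Icc a b, ∀ x,
    HasDerivWithinAt (fun s => g s x) (f t x - J' t x) (Icc a b) t

namespace IsBalanceLaw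

variable {a b : ℝ} {g f J J' : ℝ → ℝ → ℝ}

lemma sub_eq_integral (h : IsBalanceLaw a b g f J J') (x : ℝ) :
    g b x - g a x = ∫ t in a..b, (f t x - J' t x) := by
  refine (integral_eq_sub_of_hasDerivAt_of_le (f := fun t => g t x) h.le
    (fun t ht => (h.hasDerivWithinAt t ht x).continuousWithinAt)
    (fun t ht => (h.hasDerivWithinAt t (Ioo_subset_Icc_self ht) x).hasDerivAt
      (Icc_mem_nhds ht.1 ht.2)) ?_).symm
  exact ((h.continuous_source.comp (.prodMk_left x)).sub
    (h.continuous_flux_deriv.comp (.prodMk_left x))).intervalIntegrable _ _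

lemma integral_sub_eq (h : IsBalanceLaw a b g f J J') (x y : ℝ) :
    ∫ z in x..y, (g b z - g a z) = ∫ t in a..b, ((∫ z in x..y, f t z) - (J t y - J t x)) := by
  have hcont : Continuous fun p : ℝ × ℝ => f p.1 p.2 - J' p.1 p.2 :=
    h.continuous_source.sub h.continuous_flux_deriv
  have hint : IntegrableOn (Function.uncurry fun t z => f t z - J' t z) (uIcc a b ×ˢ uIcc x y) :=
    hcont.continuousOn.integrableOn_compact (isCompact_uIcc.prod isCompact_uIcc)
  simp_rw [h.sub_eq_integral]
  rw [← intervalIntegral_intervalIntegral_swap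
    (hint.mono_set (prod_mono uIoc_subset_uIcc uIoc_subset_uIcc))]
  refine integral_congr fun t _ => ?_
  have hJ' : IntervalIntegrable (J' t) volume x y :=
    (h.continuous_flux_deriv.comp (.prodMk_right t)).intervalIntegrable _ _
  rw [← integral_eq_sub_of_hasDerivAt (fun z _ => h.hasDerivAt_flux t z) hJ']
  exact integral_sub ((h.continuous_source.comp (.prodMk_right t)).intervalIntegrable _ _) hJ'

lemma integral_sub_integral_eq (h : IsBalanceLaw a b g f J J') (ha : Integrable (g a))
    (hb : Integrable (g b)) (hf : ∀ t ∈ Icc a b, Integrable (f t)) {M B : ℝ}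
    (hM : ∀ t ∈ Icc a b, ∫ x, |f t x| ≤ M) (hB : ∀ t ∈ Icc a b, ∀ x, |J t x| ≤ B)
    (htop : ∀ t ∈ Ico a b, Tendsto (J t) atTop (nhds 0))
    (hbot : ∀ t ∈ Ico a b, Tendsto (J t) atBot (nhds 0)) :
    (∫ x, g b x) - ∫ x, g a x = ∫ t in a..b, ∫ x, f t x := by
  have hleft : Tendsto (fun R : ℝ => ∫ x in -R..R, (g b x - g a x)) atTop
      (nhds ((∫ x, g b x) - ∫ x, g a x)) := by
    rw [← MeasureTheory.integral_sub hb ha]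
    exact intervalIntegral_tendsto_integral (hb.sub ha) tendsto_neg_atTop_atBot tendsto_id
  refine tendsto_nhds_unique hleft ?_
  simp_rw [h.integral_sub_eq]
  refine tendsto_integral_filter_of_dominated_convergence (fun _ => M + (B + B)) ?_ ?_
    intervalIntegrable_const ?_
  · refine Eventually.of_forall fun R => Continuous.aestronglyMeasurable ?_
    exact (continuous_parametric_intervalIntegral_of_continuous' h.continuous_source _ _).sub
      ((h.continuous_flux.comp (.prodMk_left R)).sub (h.continuous_flux.comp (.prodMk_left (-R))))
  · filter_upwards [eventually_ge_atTop 0] with R hR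
    refine Eventually.of_forall fun t ht => ?_
    have ht' : t ∈ Icc a b := Ioc_subset_Icc_self (uIoc_of_le h.le ▸ ht)
    have hsource : |∫ x in -R..R, f t x| ≤ M := by
      refine (abs_integral_le_integral_abs (by linarith)).trans (le_trans ?_ (hM t ht'))
      rw [intervalIntegral.integral_of_le (by linarith)]
      exact setIntegral_le_integral (hf t ht').abs (Eventually.of_forall fun x => abs_nonneg _)
    exact (abs_sub _ _).trans (add_le_add hsource
      ((abs_sub _ _).trans (add_le_add (hB t ht' R) (hB t ht' (-R)))))
  · have hne : ∀ᵐ t : ℝ, t ≠ b := by simp [ae_iff]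
    filter_upwards [hne] with t htb ht
    rw [uIoc_of_le h.le] at ht
    have ht' : t ∈ Ico a b := ⟨ht.1.le, ht.2.lt_of_ne htb⟩
    have hflux := (htop t ht').sub ((hbot t ht').comp tendsto_neg_atTop_atBot)
    simpa using (intervalIntegral_tendsto_integral (hf t (Ioc_subset_Icc_self ht))
      tendsto_neg_atTop_atBot tendsto_id).sub hflux

end IsBalanceLaw

end BalanceLaw

section BoundedProducts

variable {f φ w : ℝ → ℝ} {M : ℝ}

lemma integrable_pow_succ_of_abs_le (hf : Integrable f) (hM : ∀ x, |f x| ≤ M) (n : ℕ) :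
    Integrable fun x => f x ^ (n + 1) := by
  simp_rw [pow_succ]
  refine hf.bdd_mul (hf.aestronglyMeasurable.pow n) (c := M ^ n) (Eventually.of_forall fun x => ?_)
  rw [norm_pow, Real.norm_eq_abs]
  exact pow_le_pow_left₀ (abs_nonneg _) (hM x) n

lemma integral_abs_mul_le (hw : Integrable w) (hf : ∀ x, |f x| ≤ w x) (hφ : ∀ x, |φ x| ≤ M) :
    ∫ x, |φ x * f x| ≤ M * ∫ x, w x := by
  rw [← MeasureTheory.integral_const_mul]
  refine integral_mono_of_nonneg (Eventually.of_forall fun x => abs_nonneg _) (hw.const_mul M)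
    (Eventually.of_forall fun x => ?_)
  simp only [abs_mul]
  exact mul_le_mul (hφ x) (hf x) (abs_nonneg _) ((abs_nonneg _).trans (hφ x))

lemma abs_sub_le_two_mul (hM : ∀ x, |f x| ≤ M) (x y : ℝ) : |f x - f y| ≤ 2 * M :=
  (abs_sub _ _).trans (by linarith [hM x, hM y])

lemma integral_sq_le (hf : Integrable f) (hM : ∀ x, |f x| ≤ M) :
    ∫ x, f x ^ 2 ≤ M * ∫ x, |f x| := by
  refine le_trans (le_of_eq ?_) (integral_abs_mul_le hf.abs (fun x => le_rfl) hM)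
  congr 1 with x
  rw [abs_mul, abs_mul_abs_self, sq]

end BoundedProducts

namespace IsSlabSolution

variable {γ a b S : ℝ} {u : ℝ → ℝ → ℝ}

section Conservation

lemma hasDerivAt (h : IsSlabSolution γ a b u) (t x : ℝ) :
    HasDerivAt (u t) (deriv (u t) x) x :=
  (h.differentiable t x).hasDerivAt

lemma isBalanceLaw (h : IsSlabSolution γ a b u) :
    IsBalanceLaw a b u (fun t x => γ * antideriv (u t) x) (fun t x => u t x ^ 2 / 2)
      fun t x => u t x * deriv (u t) x where
  le := h.le
  continuous_source := h.continuous_antideriv.const_mul γ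
  continuous_flux := (h.continuous.pow 2).div_const 2
  continuous_flux_deriv := h.continuous.mul h.continuous_deriv
  hasDerivAt_flux t x := by
    refine (((h.hasDerivAt t x).fun_pow 2).div_const 2).congr_deriv ?_
    push_cast
    ring
  hasDerivWithinAt := h.hasDerivWithinAt

lemma isBalanceLaw_sq (h : IsSlabSolution γ a b u) :
    IsBalanceLaw a b (fun t x => u t x ^ 2) (fun _ _ => 0)
      (fun t x => 2 / 3 * u t x ^ 3 - γ * antideriv (u t) x ^ 2)
      fun t x => 2 * u t x ^ 2 * deriv (u t) x - 2 * γ * antideriv (u t) x * u t x where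
  le := h.le
  continuous_source := continuous_const
  continuous_flux := by
    have := h.continuous
    have := h.continuous_antideriv
    fun_prop
  continuous_flux_deriv := by
    have := h.continuous
    have := h.continuous_deriv
    have := h.continuous_antideriv
    fun_prop
  hasDerivAt_flux t x := by
    refine ((((h.hasDerivAt t x).fun_pow 3).const_mul (2 / 3)).sub
      (((h.hasDerivAt_antideriv t x).fun_pow 2).const_mul γ)).congr_deriv ?_
    push_cast
    ring
  hasDerivWithinAt t ht x := by
    refine ((h.hasDerivWithinAt t ht x).fun_pow 2).congr_deriv ?_
    push_cast
    ring

lemma isBalanceLaw_cube (h : IsSlabSolution γ a b u) :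
    IsBalanceLaw a b (fun t x => u t x ^ 3) (fun t x => 3 * γ * (antideriv (u t) x * u t x ^ 2))
      (fun t x => 3 / 4 * u t x ^ 4) fun t x => 3 * u t x ^ 3 * deriv (u t) x where
  le := h.le
  continuous_source := (h.continuous_antideriv.mul (h.continuous.pow 2)).const_mul _
  continuous_flux := (h.continuous.pow 4).const_mul _
  continuous_flux_deriv := ((h.continuous.pow 3).const_mul 3).mul h.continuous_deriv
  hasDerivAt_flux t x := by
    refine (((h.hasDerivAt t x).fun_pow 4).const_mul (3 / 4)).congr_deriv ?_
    push_cast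
    ring
  hasDerivWithinAt t ht x := by
    refine ((h.hasDerivWithinAt t ht x).fun_pow 3).congr_deriv ?_
    push_cast
    ring

lemma integrable_pow_succ (h : IsSlabSolution γ a b u)
    (hS : ∀ t ∈ Icc a b, ∀ x, |antideriv (u t) x| ≤ S) (hlt : a < b) {t : ℝ} (ht : t ∈ Icc a b)
    (n : ℕ) : Integrable fun x => u t x ^ (n + 1) := by
  obtain ⟨M, hM⟩ := h.exists_abs_le hS hlt
  exact integrable_pow_succ_of_abs_le (h.integrable t) (hM t ht) n

lemma integrable_antideriv_mul_sq (h : IsSlabSolution γ a b u)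
    (hS : ∀ t ∈ Icc a b, ∀ x, |antideriv (u t) x| ≤ S) (hlt : a < b) {t : ℝ} (ht : t ∈ Icc a b) :
    Integrable fun x => antideriv (u t) x * u t x ^ 2 :=
  (h.integrable_pow_succ hS hlt ht 1).bdd_mul
    (h.continuous_antideriv_right t).aestronglyMeasurable (Eventually.of_forall (hS t ht))

lemma integral_sq_eq_left (h : IsSlabSolution γ a b u)
    (hS : ∀ t ∈ Icc a b, ∀ x, |antideriv (u t) x| ≤ S) {t : ℝ} (ht : t ∈ Icc a b) :
    ∫ x, u t x ^ 2 = ∫ x, u a x ^ 2 := by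
  rcases ht.1.eq_or_lt with rfl | hat
  · rfl
  have hS' (r) (hr : r ∈ Icc a t) := hS r (Icc_subset_Icc_right ht.2 hr)
  replace h := h.mono le_rfl ht.2 ht.1
  obtain ⟨M, hM⟩ := h.exists_abs_le hS' hat
  have hflux {r : ℝ} {l : Filter ℝ} (hu : Tendsto (u r) l (nhds 0))
      (hv : Tendsto (antideriv (u r)) l (nhds 0)) :
      Tendsto (fun x => 2 / 3 * u r x ^ 3 - γ * antideriv (u r) x ^ 2) l (nhds 0) := by
    simpa using ((hu.pow 3).const_mul (2 / 3)).sub ((hv.pow 2).const_mul γ)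
  refine sub_eq_zero.1 ((h.isBalanceLaw_sq.integral_sub_integral_eq (M := 0)
    (B := 2 / 3 * M ^ 3 + γ * S ^ 2) (h.integrable_pow_succ hS' hat h.left_mem 1)
    (h.integrable_pow_succ hS' hat h.right_mem 1) (fun _ _ => integrable_zero _ _ _) (by simp)
    (fun r hr x => (abs_sub _ _).trans ?_)
    (fun r hr => hflux (h.tendsto_atTop_zero hS' hr) (h.tendsto_atTop r))
    (fun r hr => hflux (h.tendsto_atBot_zero hS' hr) (h.tendsto_atBot r))).trans (by simp))
  rw [abs_mul, abs_mul, abs_pow, abs_pow, abs_of_pos h.γ_pos,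
    abs_of_pos (by norm_num : (0 : ℝ) < 2 / 3)]
  have := h.γ_pos
  gcongr
  exacts [hM r hr x, hS' r hr x]

lemma integral_abs_antideriv_mul_sq_le (h : IsSlabSolution γ a b u)
    (hS : ∀ t ∈ Icc a b, ∀ x, |antideriv (u t) x| ≤ S) (hlt : a < b) {t : ℝ} (ht : t ∈ Icc a b) :
    ∫ x, |antideriv (u t) x * u t x ^ 2| ≤ S * ∫ x, u a x ^ 2 := by
  rw [← h.integral_sq_eq_left hS ht]
  exact integral_abs_mul_le (h.integrable_pow_succ hS hlt ht 1) (fun x => (abs_sq _).le) (hS t ht)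

lemma integral_cube_sub (h : IsSlabSolution γ a b u)
    (hS : ∀ t ∈ Icc a b, ∀ x, |antideriv (u t) x| ≤ S) (hlt : a < b) :
    (∫ x, u b x ^ 3) - ∫ x, u a x ^ 3 =
      3 * γ * ∫ t in a..b, ∫ x, antideriv (u t) x * u t x ^ 2 := by
  obtain ⟨M, hM⟩ := h.exists_abs_le hS hlt
  have hflux {r : ℝ} {l : Filter ℝ} (hu : Tendsto (u r) l (nhds 0)) :
      Tendsto (fun x => 3 / 4 * u r x ^ 4) l (nhds 0) := by
    simpa using (hu.pow 4).const_mul (3 / 4)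
  rw [← intervalIntegral.integral_const_mul]
  simp_rw [← MeasureTheory.integral_const_mul]
  refine h.isBalanceLaw_cube.integral_sub_integral_eq (M := 3 * γ * (S * ∫ x, u a x ^ 2))
    (B := 3 / 4 * M ^ 4) (h.integrable_pow_succ hS hlt h.left_mem 2)
    (h.integrable_pow_succ hS hlt h.right_mem 2)
    (fun r hr => (h.integrable_antideriv_mul_sq hS hlt hr).const_mul _)
    (fun r hr => ?_) (fun r hr x => ?_)
    (fun r hr => hflux (h.tendsto_atTop_zero hS hr))
    (fun r hr => hflux (h.tendsto_atBot_zero hS hr))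
  · have := h.γ_pos
    simp_rw [abs_mul (3 * γ), MeasureTheory.integral_const_mul]
    rw [abs_of_pos (by positivity)]
    gcongr
    exact h.integral_abs_antideriv_mul_sq_le hS hlt hr
  · rw [abs_mul, abs_pow, abs_of_pos (by norm_num : (0 : ℝ) < 3 / 4)]
    gcongr
    exact hM r hr x

end Conservation

end IsSlabSolution

section Translation

variable {φ ψ : ℝ → ℝ} {l : Filter ℝ}

lemma integrable_comp_add_mul_of_sq (hφ : AEStronglyMeasurable φ)
    (hψ : AEStronglyMeasurable ψ) (hφ2 : Integrable fun x => φ x ^ 2)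
    (hψ2 : Integrable fun x => ψ x ^ 2) (k : ℝ) : Integrable fun x => φ (x + k) * ψ x :=
  (((memLp_two_iff_integrable_sq hφ).2 hφ2).comp_measurePreserving
    (measurePreserving_add_right volume k)).integrable_mul ((memLp_two_iff_integrable_sq hψ).2 hψ2)

lemma tendsto_integral_comp_add_mul [l.IsCountablyGenerated] {S : ℝ} (hφ : Continuous φ)
    (hS : ∀ x, |φ x| ≤ S) (hψ : Integrable ψ)
    (hlim : ∀ x, Tendsto (fun k => φ (x + k)) l (nhds 0)) :
    Tendsto (fun k => ∫ x, φ (x + k) * ψ x) l (nhds 0) := by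
  rw [← MeasureTheory.integral_zero ℝ ℝ]
  refine MeasureTheory.tendsto_integral_filter_of_dominated_convergence (fun x => S * |ψ x|)
    (Eventually.of_forall fun k => ?_)
    (Eventually.of_forall fun k => Eventually.of_forall fun x => ?_) (hψ.abs.const_mul S)
    (Eventually.of_forall fun x => by simpa using (hlim x).mul_const (ψ x))
  · exact (hφ.comp (continuous_add_const k)).aestronglyMeasurable.mul hψ.aestronglyMeasurable
  · rw [Real.norm_eq_abs, abs_mul]
    exact mul_le_mul_of_nonneg_right (hS _) (abs_nonneg _)

lemma abs_mul_le_min_add_sq_div {c : ℝ} (hc : 0 < c) (p q : ℝ) :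
    |p * q| ≤ min |p * q| (c * q ^ 2) + p ^ 2 / c := by
  rcases le_total |p * q| (c * q ^ 2) with h | h
  · rw [min_eq_left h]
    exact le_add_of_nonneg_right (by positivity)
  · rw [min_eq_right h]
    have hpq : |p * q| ≤ p ^ 2 / c := by
      rw [le_div_iff₀ hc]
      rcases (abs_nonneg (p * q)).eq_or_lt with hzero | hpos
      · rw [← hzero, zero_mul]
        positivity
      · refine le_of_mul_le_mul_right ?_ hpos
        calc |p * q| * c * |p * q| = c * q ^ 2 * p ^ 2 := by
              rw [mul_right_comm, abs_mul_abs_self]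
              ring
          _ ≤ |p * q| * p ^ 2 := by gcongr
          _ = p ^ 2 * |p * q| := mul_comm _ _
    have : 0 ≤ c * q ^ 2 := by positivity
    linarith

-- The truncation `min _ (c * ψ ^ 2)` is dominated, and the rest costs at most `‖φ‖₂² / c`.
lemma tendsto_integral_comp_add_mul_of_sq [l.IsCountablyGenerated] (hφ : Continuous φ)
    (hψ : Continuous ψ) (hφ2 : Integrable fun x => φ x ^ 2) (hψ2 : Integrable fun x => ψ x ^ 2)
    (hlim : ∀ x, Tendsto (fun k => φ (x + k)) l (nhds 0)) :
    Tendsto (fun k => ∫ x, φ (x + k) * ψ x) l (nhds 0) := by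
  have htrunc (c : ℝ) : 0 < c →
      Tendsto (fun k => ∫ x, min |φ (x + k) * ψ x| (c * ψ x ^ 2)) l (nhds 0) := fun hc => by
    rw [← MeasureTheory.integral_zero ℝ ℝ]
    refine MeasureTheory.tendsto_integral_filter_of_dominated_convergence (fun x => c * ψ x ^ 2)
      (Eventually.of_forall fun k => Continuous.aestronglyMeasurable (by fun_prop))
      (Eventually.of_forall fun k => Eventually.of_forall fun x => ?_) (hψ2.const_mul c)
      (Eventually.of_forall fun x => ?_)
    · rw [Real.norm_of_nonneg (by positivity)]
      exact min_le_right _ _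
    · have := ((hlim x).mul_const (ψ x)).abs.min (tendsto_const_nhds (x := c * ψ x ^ 2))
      rwa [zero_mul, abs_zero, min_eq_left (by positivity)] at this
  have hbound {c : ℝ} (hc : 0 < c) (k : ℝ) : |∫ x, φ (x + k) * ψ x| ≤
      (∫ x, min |φ (x + k) * ψ x| (c * ψ x ^ 2)) + (∫ x, φ x ^ 2) / c := by
    have hint := integrable_comp_add_mul_of_sq hφ.aestronglyMeasurable hψ.aestronglyMeasurable
      hφ2 hψ2 k
    have hmin : Integrable fun x => min |φ (x + k) * ψ x| (c * ψ x ^ 2) :=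
      hint.abs.inf (hψ2.const_mul c)
    have hshift := (hφ2.comp_add_right k).div_const c
    rw [← integral_add_right_eq_self (fun x => φ x ^ 2) k, ← MeasureTheory.integral_div,
      ← MeasureTheory.integral_add hmin hshift]
    exact abs_integral_le_integral_abs.trans
      (integral_mono hint.abs (hmin.add hshift) fun x => abs_mul_le_min_add_sq_div hc _ _)
  rw [Metric.tendsto_nhds]
  intro ε hε
  obtain ⟨c, hc, hcε⟩ : ∃ c > 0, (∫ x, φ x ^ 2) / c < ε / 2 :=
    ((tendsto_const_nhds.div_atTop tendsto_id).eventually_lt_const (half_pos hε) |>.and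
      (eventually_gt_atTop 0)).exists.imp fun c hc => hc.symm
  filter_upwards [(htrunc c hc).eventually_lt_const (half_pos hε)] with k hk
  rw [Real.dist_eq, sub_zero]
  linarith [hbound hc k]

lemma tendsto_integral_sub_mul_sub (hint : ∀ k, Integrable fun x => φ (x + k) * ψ x)
    (htop : Tendsto (fun k => ∫ x, φ (x + k) * ψ x) atTop (nhds 0))
    (hbot : Tendsto (fun k => ∫ x, φ (x + k) * ψ x) atBot (nhds 0)) :
    Tendsto (fun L => ∫ x, (φ x - φ (x - L)) * (ψ x - ψ (x - L))) atTop
      (nhds (2 * ∫ x, φ x * ψ x)) := by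
  have hdiag : Integrable fun x => φ x * ψ x := by simpa using hint 0
  have hexpand (L : ℝ) : ∫ x, (φ x - φ (x - L)) * (ψ x - ψ (x - L)) =
      2 * (∫ x, φ x * ψ x) - ((∫ x, φ (x + L) * ψ x) + ∫ x, φ (x + -L) * ψ x) := by
    have hcross : Integrable fun x => φ x * ψ (x - L) := by
      simpa using (hint L).comp_sub_right L
    have hdiag_shift := integral_sub_right_eq_self (μ := volume) (fun x => φ x * ψ x) L
    have hcross_shift := integral_sub_right_eq_self (μ := volume) (fun x => φ (x + L) * ψ x) L
    simp only [sub_add_cancel] at hcross_shift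
    calc ∫ x, (φ x - φ (x - L)) * (ψ x - ψ (x - L))
        = ∫ x, (φ x * ψ x + φ (x - L) * ψ (x - L) - (φ x * ψ (x - L) + φ (x + -L) * ψ x)) := by
          congr 1 with x
          rw [← sub_eq_add_neg]
          ring
      _ = _ := by
          rw [MeasureTheory.integral_sub (hdiag.fun_add (hdiag.comp_sub_right L))
            (hcross.fun_add (hint (-L))), MeasureTheory.integral_add hdiag (hdiag.comp_sub_right L),
            MeasureTheory.integral_add hcross (hint (-L)), hdiag_shift, hcross_shift]
          ring
  simp_rw [hexpand]
  simpa using (htop.add (hbot.comp tendsto_neg_atTop_atBot)).const_sub (2 * ∫ x, φ x * ψ x)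

end Translation

section WindowIntegral

variable {f : ℝ → ℝ}

lemma integral_window_eq_sub (hf : Continuous f) (L x : ℝ) :
    ∫ y in (x - L)..x, f y = (∫ y in (0 : ℝ)..x, f y) - ∫ y in (0 : ℝ)..(x - L), f y :=
  (integral_interval_sub_left (hf.intervalIntegrable _ _) (hf.intervalIntegrable _ _)).symm

lemma hasDerivAt_integral_window (hf : Continuous f) (L x : ℝ) :
    HasDerivAt (fun x => ∫ y in (x - L)..x, f y) (f x - f (x - L)) x := by
  simp_rw [integral_window_eq_sub hf]
  have hderiv (z : ℝ) := (hf.integral_hasStrictDerivAt 0 z).hasDerivAt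
  exact (hderiv x).sub ((hderiv (x - L)).comp_sub_const x L)

lemma abs_integral_window_le {S : ℝ} (hS : ∀ x, |f x| ≤ S) (L x : ℝ) :
    |∫ y in (x - L)..x, f y| ≤ S * |L| := by
  simpa using norm_integral_le_of_norm_le_const (f := f) (a := x - L) (b := x) fun y _ => hS y

lemma continuous_integral_window {F : ℝ → ℝ → ℝ} (hF : Continuous fun p : ℝ × ℝ => F p.1 p.2)
    (L : ℝ) : Continuous fun p : ℝ × ℝ => ∫ y in (p.2 - L)..p.2, F p.1 y := by
  have hsplit (p : ℝ × ℝ) := integral_window_eq_sub (hF.comp (.prodMk_right p.1)) L p.2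
  simp only [Function.comp_def] at hsplit
  simp_rw [hsplit]
  have hF' : Continuous (Function.uncurry fun (p : ℝ × ℝ) y => F p.1 y) :=
    hF.comp (f := fun q : (ℝ × ℝ) × ℝ => (q.1.1, q.2)) (by fun_prop)
  exact (continuous_parametric_intervalIntegral_of_continuous hF' continuous_snd).sub
    (continuous_parametric_intervalIntegral_of_continuous hF' (continuous_snd.sub continuous_const))

lemma tendsto_integral_window {l : Filter ℝ} [l.IsCountablyGenerated] (hf : Continuous f) {S : ℝ}
    (hS : ∀ x, |f x| ≤ S) (hshift : ∀ k : ℝ, Tendsto (fun x => x + k) l l)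
    (hlim : Tendsto f l (nhds 0)) (L : ℝ) :
    Tendsto (fun x => ∫ y in (x - L)..x, f y) l (nhds 0) := by
  have hsubst (x : ℝ) : ∫ y in (x - L)..x, f y = ∫ θ in (0 : ℝ)..L, f (x + -θ) := by
    simp [← sub_eq_add_neg, integral_comp_sub_left]
  simp_rw [hsubst]
  suffices Tendsto (fun x => ∫ θ in (0 : ℝ)..L, f (x + -θ)) l
      (nhds (∫ _ in (0 : ℝ)..L, (0 : ℝ))) by
    simpa only [intervalIntegral.integral_zero] using this
  exact intervalIntegral.tendsto_integral_filter_of_dominated_convergence (fun _ => S)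
    (Eventually.of_forall fun x => Continuous.aestronglyMeasurable (by fun_prop))
    (Eventually.of_forall fun x => Eventually.of_forall fun θ _ => hS _) intervalIntegrable_const
    (Eventually.of_forall fun θ _ => hlim.comp (hshift (-θ)))

end WindowIntegral

namespace IsSlabSolution

variable {γ a b S : ℝ} {u : ℝ → ℝ → ℝ}

section AntiderivEnergy

lemma hasDerivWithinAt_antideriv_sub (h : IsSlabSolution γ a b u) (x y : ℝ) {t : ℝ}
    (ht : t ∈ Icc a b) :
    HasDerivWithinAt (fun s => antideriv (u s) y - antideriv (u s) x)
      (γ * (∫ z in x..y, antideriv (u t) z) - (u t y ^ 2 - u t x ^ 2) / 2) (Icc a b) t := by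
  set rate : ℝ → ℝ := fun s =>
    γ * (∫ z in x..y, antideriv (u s) z) - (u s y ^ 2 - u s x ^ 2) / 2 with hrate
  have hcont : Continuous rate := by
    have := continuous_parametric_intervalIntegral_of_continuous' (μ := volume)
      (f := fun s => antideriv (u s)) h.continuous_antideriv x y
    have hux := h.continuous.comp (.prodMk_left x)
    have huy := h.continuous.comp (.prodMk_left y)
    exact (this.const_mul γ).sub (((huy.pow 2).sub (hux.pow 2)).div_const 2)
  have hincrement {s : ℝ} (hs : s ∈ Icc a b) : antideriv (u s) y - antideriv (u s) x =
      antideriv (u a) y - antideriv (u a) x + ∫ r in a..s, rate r := by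
    have hlaw := (h.mono le_rfl hs.2 hs.1).isBalanceLaw.integral_sub_eq x y
    rw [integral_sub ((h.continuous_right s).intervalIntegrable _ _)
      ((h.continuous_right a).intervalIntegrable _ _), ← antideriv_sub_antideriv (h.integrable s),
      ← antideriv_sub_antideriv (h.integrable a)] at hlaw
    simp_rw [hrate, sub_div, ← intervalIntegral.integral_const_mul, ← hlaw]
    ring
  exact ((hcont.integral_hasStrictDerivAt a t).hasDerivAt.const_add _).hasDerivWithinAt.congr
    (fun s hs => hincrement hs) (hincrement ht)

-- Only differences of `v` in space have a known time derivative: `v` itself would involve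
-- `∫_{-∞}^x v`, which need not converge. The full energy is recovered as `L → ∞`.
lemma isBalanceLaw_antideriv_sub_sq (h : IsSlabSolution γ a b u) (L : ℝ) :
    IsBalanceLaw a b (fun t x => (antideriv (u t) x - antideriv (u t) (x - L)) ^ 2)
      (fun t x => -((antideriv (u t) x - antideriv (u t) (x - L)) *
        (u t x ^ 2 - u t (x - L) ^ 2)))
      (fun t x => -(γ * (∫ y in (x - L)..x, antideriv (u t) y) ^ 2))
      fun t x => -(2 * γ * (∫ y in (x - L)..x, antideriv (u t) y) *
        (antideriv (u t) x - antideriv (u t) (x - L))) := by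
  have hshift : Continuous fun p : ℝ × ℝ => (p.1, p.2 - L) := by fun_prop
  have hu := h.continuous
  have := h.continuous.comp hshift
  have hv := h.continuous_antideriv
  have hv' := h.continuous_antideriv.comp hshift
  have hwindow :=
    continuous_integral_window (F := fun t => antideriv (u t)) h.continuous_antideriv L
  refine ⟨h.le, by fun_prop, by fun_prop, by fun_prop, fun t x => ?_, fun t ht x => ?_⟩
  · refine (((hasDerivAt_integral_window (h.continuous_antideriv_right t) L x).fun_pow
      2).const_mul γ).neg.congr_deriv ?_
    push_cast
    ring
  · refine ((h.hasDerivWithinAt_antideriv_sub (x - L) x ht).fun_pow 2).congr_deriv ?_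
    push_cast
    ring

lemma integrable_antideriv_sub_sq (h : IsSlabSolution γ a b u) (t L : ℝ) :
    Integrable fun x => (antideriv (u t) x - antideriv (u t) (x - L)) ^ 2 := by
  have hv := (memLp_two_iff_integrable_sq
    (h.continuous_antideriv_right t).aestronglyMeasurable).2 (h.integrable_antideriv_sq t)
  exact (hv.sub (hv.comp_measurePreserving (measurePreserving_sub_right volume L))).integrable_sq

lemma integrable_sq_sub_sq (h : IsSlabSolution γ a b u)
    (hS : ∀ t ∈ Icc a b, ∀ x, |antideriv (u t) x| ≤ S) (hlt : a < b) {t : ℝ} (ht : t ∈ Icc a b)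
    (L : ℝ) : Integrable fun x => u t x ^ 2 - u t (x - L) ^ 2 :=
  (h.integrable_pow_succ hS hlt ht 1).sub ((h.integrable_pow_succ hS hlt ht 1).comp_sub_right L)

lemma integral_abs_window_source_le (h : IsSlabSolution γ a b u)
    (hS : ∀ t ∈ Icc a b, ∀ x, |antideriv (u t) x| ≤ S) (hlt : a < b) {t : ℝ} (ht : t ∈ Icc a b)
    (L : ℝ) :
    ∫ x, |(antideriv (u t) x - antideriv (u t) (x - L)) * (u t x ^ 2 - u t (x - L) ^ 2)| ≤
      2 * S * (2 * ∫ x, u a x ^ 2) := by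
  have hint := h.integrable_pow_succ hS hlt ht 1
  refine (integral_abs_mul_le (hint.fun_add (hint.comp_sub_right L))
    (fun x => (abs_sub _ _).trans (by simp only [abs_sq]; rfl))
    fun x => abs_sub_le_two_mul (hS t ht) x (x - L)).trans_eq ?_
  rw [MeasureTheory.integral_add hint (hint.comp_sub_right L),
    integral_sub_right_eq_self (fun x => u t x ^ (1 + 1)), h.integral_sq_eq_left hS ht,
    two_mul (∫ x, _)]

lemma integral_antideriv_sub_sq_sub (h : IsSlabSolution γ a b u)
    (hS : ∀ t ∈ Icc a b, ∀ x, |antideriv (u t) x| ≤ S) (hlt : a < b) (L : ℝ) :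
    (∫ x, (antideriv (u b) x - antideriv (u b) (x - L)) ^ 2) -
        ∫ x, (antideriv (u a) x - antideriv (u a) (x - L)) ^ 2 =
      -∫ t in a..b, ∫ x, (antideriv (u t) x - antideriv (u t) (x - L)) *
        (u t x ^ 2 - u t (x - L) ^ 2) := by
  have hflux (t : ℝ) {l : Filter ℝ} [l.IsCountablyGenerated]
      (hl : ∀ k : ℝ, Tendsto (fun x => x + k) l l) (hv : Tendsto (antideriv (u t)) l (nhds 0))
      (hSt : ∀ x, |antideriv (u t) x| ≤ S) :
      Tendsto (fun x => -(γ * (∫ y in (x - L)..x, antideriv (u t) y) ^ 2)) l (nhds 0) := by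
    simpa using (((tendsto_integral_window (h.continuous_antideriv_right t) hSt hl hv L).pow
      2).const_mul γ).neg
  rw [← intervalIntegral.integral_neg]
  simp_rw [← MeasureTheory.integral_neg]
  refine (h.isBalanceLaw_antideriv_sub_sq L).integral_sub_integral_eq
    (M := 2 * S * (2 * ∫ x, u a x ^ 2)) (B := γ * (S * |L|) ^ 2)
    (h.integrable_antideriv_sub_sq a L) (h.integrable_antideriv_sub_sq b L) (fun t ht => ?_)
    (fun t ht => ?_) (fun t ht x => ?_)
    (fun t ht => hflux t (fun k => tendsto_atTop_add_const_right _ k tendsto_id) (h.tendsto_atTop t)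
      (hS t (Ico_subset_Icc_self ht)))
    (fun t ht => hflux t (fun k => tendsto_atBot_add_const_right _ k tendsto_id) (h.tendsto_atBot t)
      (hS t (Ico_subset_Icc_self ht)))
  · have hv := h.continuous_antideriv_right t
    exact ((h.integrable_sq_sub_sq hS hlt ht L).bdd_mul
      (Continuous.aestronglyMeasurable (by fun_prop))
      (Eventually.of_forall fun x => abs_sub_le_two_mul (hS t ht) x (x - L))).neg
  · simp_rw [abs_neg]
    exact h.integral_abs_window_source_le hS hlt ht L
  · rw [abs_neg, abs_mul, abs_of_pos h.γ_pos, abs_pow]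
    have := h.γ_pos
    gcongr
    exact abs_integral_window_le (hS t ht) L x

lemma tendsto_integral_antideriv_sub_sq (h : IsSlabSolution γ a b u) (t : ℝ) :
    Tendsto (fun L => ∫ x, (antideriv (u t) x - antideriv (u t) (x - L)) ^ 2) atTop
      (nhds (2 * ∫ x, antideriv (u t) x ^ 2)) := by
  have hv := h.continuous_antideriv_right t
  have hv2 := h.integrable_antideriv_sq t
  simp only [sq]
  exact tendsto_integral_sub_mul_sub
    (integrable_comp_add_mul_of_sq hv.aestronglyMeasurable hv.aestronglyMeasurable hv2 hv2)
    (tendsto_integral_comp_add_mul_of_sq hv hv hv2 hv2 fun x =>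
      (h.tendsto_atTop t).comp (tendsto_atTop_add_const_left _ x tendsto_id))
    (tendsto_integral_comp_add_mul_of_sq hv hv hv2 hv2 fun x =>
      (h.tendsto_atBot t).comp (tendsto_atBot_add_const_left _ x tendsto_id))

lemma tendsto_integral_window_source (h : IsSlabSolution γ a b u)
    (hS : ∀ t ∈ Icc a b, ∀ x, |antideriv (u t) x| ≤ S) (hlt : a < b) {t : ℝ} (ht : t ∈ Icc a b) :
    Tendsto (fun L => ∫ x, (antideriv (u t) x - antideriv (u t) (x - L)) *
      (u t x ^ 2 - u t (x - L) ^ 2)) atTop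
      (nhds (2 * ∫ x, antideriv (u t) x * u t x ^ 2)) := by
  have hv := h.continuous_antideriv_right t
  have hu2 := h.integrable_pow_succ hS hlt ht 1
  exact tendsto_integral_sub_mul_sub (ψ := fun x => u t x ^ 2)
    (fun k => hu2.bdd_mul (Continuous.aestronglyMeasurable (by fun_prop))
      (Eventually.of_forall fun x => hS t ht (x + k)))
    (tendsto_integral_comp_add_mul hv (hS t ht) hu2 fun x =>
      (h.tendsto_atTop t).comp (tendsto_atTop_add_const_left _ x tendsto_id))
    (tendsto_integral_comp_add_mul hv (hS t ht) hu2 fun x =>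
      (h.tendsto_atBot t).comp (tendsto_atBot_add_const_left _ x tendsto_id))

lemma integral_antideriv_sq_sub (h : IsSlabSolution γ a b u)
    (hS : ∀ t ∈ Icc a b, ∀ x, |antideriv (u t) x| ≤ S) (hlt : a < b) :
    (∫ x, antideriv (u b) x ^ 2) - ∫ x, antideriv (u a) x ^ 2 =
      -∫ t in a..b, ∫ x, antideriv (u t) x * u t x ^ 2 := by
  have hleft := (h.tendsto_integral_antideriv_sub_sq b).sub (h.tendsto_integral_antideriv_sub_sq a)
  simp_rw [h.integral_antideriv_sub_sq_sub hS hlt] at hleft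
  have hIcc {t : ℝ} (ht : t ∈ uIoc a b) : t ∈ Icc a b :=
    Ioc_subset_Icc_self (uIoc_of_le h.le ▸ ht)
  have hright : Tendsto (fun L => ∫ t in a..b, ∫ x,
      (antideriv (u t) x - antideriv (u t) (x - L)) * (u t x ^ 2 - u t (x - L) ^ 2)) atTop
      (nhds (∫ t in a..b, 2 * ∫ x, antideriv (u t) x * u t x ^ 2)) := by
    refine intervalIntegral.tendsto_integral_filter_of_dominated_convergence
      (fun _ => 2 * S * (2 * ∫ x, u a x ^ 2)) (Eventually.of_forall fun L => ?_)
      (Eventually.of_forall fun L => Eventually.of_forall fun t ht =>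
        MeasureTheory.abs_integral_le_integral_abs.trans
          (h.integral_abs_window_source_le hS hlt (hIcc ht) L))
      intervalIntegrable_const
      (Eventually.of_forall fun t ht => h.tendsto_integral_window_source hS hlt (hIcc ht))
    have hsource := (h.isBalanceLaw_antideriv_sub_sq L).continuous_source.neg
    simp only [Pi.neg_def, neg_neg] at hsource
    exact (hsource.stronglyMeasurable.integral_prod_right (ν := volume)).aestronglyMeasurable
  have heq := tendsto_nhds_unique hleft hright.neg
  rw [intervalIntegral.integral_const_mul] at heq
  linarith

end AntiderivEnergy

end IsSlabSolution

section SupremumBounds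

lemma sq_le_half_integral_sq_add_integral_sq {F F' : ℝ → ℝ} (hF : ∀ x, HasDerivAt F (F' x) x)
    (hF' : AEStronglyMeasurable F') (hF2 : Integrable fun x => F x ^ 2)
    (hF'2 : Integrable fun x => F' x ^ 2) (x : ℝ) :
    F x ^ 2 ≤ ((∫ x, F x ^ 2) + ∫ x, F' x ^ 2) / 2 := by
  have hcont : Continuous F := continuous_iff_continuousAt.2 fun x => (hF x).continuousAt
  have hderiv (y : ℝ) : HasDerivAt (fun y => F y ^ 2) (2 * (F y * F' y)) y :=
    ((hF y).fun_pow 2).congr_deriv (by push_cast; ring)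
  have hint : Integrable fun y => 2 * (F y * F' y) :=
    (((memLp_two_iff_integrable_sq hcont.aestronglyMeasurable).2 hF2).integrable_mul
      ((memLp_two_iff_integrable_sq hF').2 hF'2)).const_mul 2
  have hsum := hF2.fun_add hF'2
  have hleft : F x ^ 2 ≤ ∫ y in Iic x, (F y ^ 2 + F' y ^ 2) := by
    rw [← sub_zero (F x ^ 2), ← integral_Iic_of_hasDerivAt_of_tendsto' (fun y _ => hderiv y)
      hint.integrableOn (tendsto_zero_of_hasDerivAt_of_integrableOn_Iic (a := 0)
        (fun y _ => hderiv y) hint.integrableOn hF2.integrableOn)]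
    exact integral_mono hint.integrableOn hsum.integrableOn fun y => by
      linarith [two_mul_le_add_sq (F y) (F' y)]
  have hright : F x ^ 2 ≤ ∫ y in Ioi x, (F y ^ 2 + F' y ^ 2) := by
    rw [← neg_neg (F x ^ 2), ← zero_sub (F x ^ 2), ← integral_Ioi_of_hasDerivAt_of_tendsto'
      (fun y _ => hderiv y) hint.integrableOn
        (tendsto_zero_of_hasDerivAt_of_integrableOn_Ioi (a := 0) (fun y _ => hderiv y)
          hint.integrableOn hF2.integrableOn),
      ← MeasureTheory.integral_neg]
    exact integral_mono hint.neg.integrableOn hsum.integrableOn fun y => by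
      linarith [two_mul_le_add_sq (F y) (-F' y), neg_sq (F' y)]
  have hsplit := integral_add_compl (measurableSet_Iic (a := x)) hsum
  rw [compl_Iic, MeasureTheory.integral_add hF2 hF'2] at hsplit
  linarith

lemma exists_mem_Icc_le_integral {f : ℝ → ℝ} (hf : Integrable f) (hnonneg : ∀ x, 0 ≤ f x) (x : ℝ) :
    ∃ y ∈ Icc x (x + 1), f y ≤ ∫ z, f z := by
  obtain ⟨y, hy, hle⟩ := exists_le_setAverage (μ := volume) (s := Icc x (x + 1)) (by simp) (by simp)
    hf.integrableOn
  refine ⟨y, hy, hle.trans ?_⟩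
  rw [setAverage_eq, measureReal_def, Real.volume_Icc, add_sub_cancel_left]
  simpa using setIntegral_le_integral hf (Eventually.of_forall hnonneg)

lemma le_add_of_sq_le_sq_add_mul {x y z : ℝ} (hy : 0 ≤ y) (hz : 0 ≤ z)
    (h : x ^ 2 ≤ y ^ 2 + z * x) : x ≤ y + z := by
  by_contra! hlt
  nlinarith

end SupremumBounds

namespace IsSlabSolution

variable {γ a b S : ℝ} {u : ℝ → ℝ → ℝ}

section EnergyGrowth

lemma antideriv_sq_le (h : IsSlabSolution γ a b u)
    (hS : ∀ t ∈ Icc a b, ∀ x, |antideriv (u t) x| ≤ S) (hlt : a < b) {t : ℝ} (ht : t ∈ Icc a b)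
    (x : ℝ) :
    antideriv (u t) x ^ 2 ≤ ((∫ x, antideriv (u t) x ^ 2) + ∫ x, u a x ^ 2) / 2 := by
  rw [← h.integral_sq_eq_left hS ht]
  exact sq_le_half_integral_sq_add_integral_sq (h.hasDerivAt_antideriv t)
    (h.continuous_right t).aestronglyMeasurable (h.integrable_antideriv_sq t)
    (h.integrable_pow_succ hS hlt ht 1) x

lemma abs_integral_antideriv_sq_sub_le (h : IsSlabSolution γ a b u)
    (hS : ∀ t ∈ Icc a b, ∀ x, |antideriv (u t) x| ≤ S) (hlt : a < b) :
    |(∫ x, antideriv (u b) x ^ 2) - ∫ x, antideriv (u a) x ^ 2| ≤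
      S * (∫ x, u a x ^ 2) * (b - a) := by
  rw [h.integral_antideriv_sq_sub hS hlt, abs_neg, ← abs_of_pos (sub_pos.2 hlt)]
  refine intervalIntegral.norm_integral_le_of_norm_le_const
    (f := fun t => ∫ x, antideriv (u t) x * u t x ^ 2) fun t ht => ?_
  exact MeasureTheory.abs_integral_le_integral_abs.trans
    (h.integral_abs_antideriv_mul_sq_le hS hlt (Ioc_subset_Icc_self (uIoc_of_le h.le ▸ ht)))

lemma integral_antideriv_sq_le (h : IsSlabSolution γ a b u)
    (hS : ∀ t ∈ Icc a b, ∀ x, |antideriv (u t) x| ≤ S) {s t : ℝ} (hs : s ∈ Icc a b)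
    (ht : t ∈ Icc a b) :
    ∫ x, antideriv (u t) x ^ 2 ≤
      (∫ x, antideriv (u s) x ^ 2) + S * (∫ x, u a x ^ 2) * (b - a) := by
  have hforward {r₁ r₂ : ℝ} (h₁ : r₁ ∈ Icc a b) (h₂ : r₂ ∈ Icc a b) (hr : r₁ < r₂) :
      |(∫ x, antideriv (u r₂) x ^ 2) - ∫ x, antideriv (u r₁) x ^ 2| ≤
        S * (∫ x, u a x ^ 2) * (b - a) := by
    refine ((h.mono h₁.1 h₂.2 hr.le).abs_integral_antideriv_sq_sub_le
      (fun r hr => hS r (Icc_subset_Icc h₁.1 h₂.2 hr)) hr).trans ?_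
    rw [h.integral_sq_eq_left hS h₁]
    have := h.bound_nonneg hS
    have := h₁.1
    have := h₂.2
    have : 0 ≤ ∫ x, u a x ^ 2 := integral_nonneg fun x => sq_nonneg _
    gcongr
  rcases lt_trichotomy s t with hst | rfl | hts
  · linarith [le_abs_self ((∫ x, antideriv (u t) x ^ 2) - ∫ x, antideriv (u s) x ^ 2),
      hforward hs ht hst]
  · have := h.bound_nonneg hS
    have := sub_nonneg.2 h.le
    exact le_add_of_nonneg_right (mul_nonneg
      (mul_nonneg ‹_› (integral_nonneg fun x => sq_nonneg _)) ‹_›)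
  · linarith [neg_abs_le ((∫ x, antideriv (u s) x ^ 2) - ∫ x, antideriv (u t) x ^ 2),
      hforward ht hs hts]

-- The supremum of `|v|` over the slab bounds itself: it enters the growth rate of `∫ v ^ 2`.
lemma exists_bound_sq_le (h : IsSlabSolution γ a b u)
    (hS : ∀ t ∈ Icc a b, ∀ x, |antideriv (u t) x| ≤ S) (hlt : a < b) :
    ∃ S₀, (∀ t ∈ Icc a b, ∀ x, |antideriv (u t) x| ≤ S₀) ∧ ∀ t ∈ Icc a b,
      S₀ ^ 2 ≤ ((∫ x, antideriv (u t) x ^ 2) + S₀ * (∫ x, u a x ^ 2) * (b - a) +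
        ∫ x, u a x ^ 2) / 2 := by
  have hbdd : BddAbove (range fun p : Icc a b × ℝ => |antideriv (u p.1) p.2|) :=
    ⟨S, by rintro _ ⟨p, rfl⟩; exact hS p.1 p.1.2 p.2⟩
  set S₀ := ⨆ p : Icc a b × ℝ, |antideriv (u p.1) p.2|
  have hS₀ (t) (ht : t ∈ Icc a b) (x) : |antideriv (u t) x| ≤ S₀ := le_ciSup hbdd (⟨t, ht⟩, x)
  have : Nonempty (Icc a b × ℝ) := ⟨(⟨a, h.left_mem⟩, 0)⟩
  refine ⟨S₀, hS₀, fun t ht => ?_⟩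
  have hsq (s) (hs : s ∈ Icc a b) (x) : antideriv (u s) x ^ 2 ≤
      ((∫ x, antideriv (u t) x ^ 2) + S₀ * (∫ x, u a x ^ 2) * (b - a) + ∫ x, u a x ^ 2) / 2 :=
    (h.antideriv_sq_le hS₀ hlt hs x).trans (by linarith [h.integral_antideriv_sq_le hS₀ ht hs])
  exact (Real.le_sqrt (h.bound_nonneg hS₀) ((sq_nonneg _).trans (hsq a h.left_mem 0))).1
    (ciSup_le fun p => Real.abs_le_sqrt (hsq p.1 p.1.2 p.2))

lemma abs_antideriv_le_of_energy (h : IsSlabSolution γ a b u)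
    (hS : ∀ t ∈ Icc a b, ∀ x, |antideriv (u t) x| ≤ S) (hlt : a < b) {s t : ℝ} (hs : s ∈ Icc a b)
    (ht : t ∈ Icc a b) (x : ℝ) :
    |antideriv (u t) x| ≤ 1 + ((∫ x, antideriv (u s) x ^ 2) + ∫ x, u s x ^ 2) / 2 +
      (∫ x, u s x ^ 2) * (b - a) / 2 := by
  obtain ⟨S₀, hS₀, hsq⟩ := h.exists_bound_sq_le hS hlt
  replace hsq := hsq s hs
  rw [← h.integral_sq_eq_left hS hs] at hsq
  have hQ : 0 ≤ ∫ x, u s x ^ 2 := integral_nonneg fun x => sq_nonneg _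
  have hN : 0 ≤ ∫ x, antideriv (u s) x ^ 2 := integral_nonneg fun x => sq_nonneg _
  have := sub_pos.2 hlt
  refine (hS₀ t ht x).trans (le_add_of_sq_le_sq_add_mul (by positivity) (by positivity)
    (hsq.trans ?_))
  nlinarith [sq_nonneg ((∫ x, antideriv (u s) x ^ 2) + ∫ x, u s x ^ 2)]

end EnergyGrowth

end IsSlabSolution

-- A quadratic inequality for `y * σ` whose coefficients depend on `K` only.
lemma mul_le_of_sq_le {y σ K m : ℝ} (hy : 0 ≤ y) (hσ : 0 < σ) (hσ1 : σ ≤ 1) (hK : 1 ≤ K)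
    (hmσ : K * (m * σ) ≤ K * (1 + 2 * K) + y * σ)
    (hsq : y ^ 2 ≤ (K + y * (m * K) * σ ^ 2 + m * K) / 2) : y * σ ≤ 6 * K ^ 2 := by
  have hσsq : σ ^ 2 ≤ 1 := pow_le_one₀ hσ.le hσ1
  have hscaled : (y * σ) ^ 2 ≤
      (K * σ ^ 2 + y * σ * (K * (m * σ)) * σ ^ 2 + K * (m * σ) * σ) / 2 :=
    calc (y * σ) ^ 2 = y ^ 2 * σ ^ 2 := mul_pow _ _ _
      _ ≤ ((K + y * (m * K) * σ ^ 2 + m * K) / 2) * σ ^ 2 := by gcongr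
      _ = _ := by ring
  have hbound : (y * σ) ^ 2 ≤ (K * 1 + y * σ * (K * (1 + 2 * K) + y * σ) * 1 +
      (K * (1 + 2 * K) + y * σ) * 1) / 2 := by
    refine hscaled.trans ?_
    gcongr
  have hquad : (y * σ) ^ 2 ≤ (2 * K) ^ 2 + (K * (1 + 2 * K) + 1) * (y * σ) := by
    nlinarith
  have := le_add_of_sq_le_sq_add_mul (by positivity) (by positivity) hquad
  nlinarith

/-- The bound for `v` on a slab of length at most `1` obtained from a bound `K` for the integrals of
`|u|` and `v²` at its initial time (`IsSlabSolution.abs_antideriv_le_of_integral_le`). It does not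
depend on the size of `v` inside the slab. -/
noncomputable def shortSlabBound (γ K : ℝ) : ℝ :=
  1 + 3 * K + γ * (15 * K ^ 2) + (1 + K) * (15 * K ^ 2) ^ 2

namespace IsSlabSolution

variable {γ a b S K Y : ℝ} {u : ℝ → ℝ → ℝ}

section ShortTime

lemma abs_left_le_div_sqrt (h : IsSlabSolution γ a b u)
    (hS : ∀ t ∈ Icc a b, ∀ x, |antideriv (u t) x| ≤ S) (hlt : a < b) (hK : ∫ x, |u a x| ≤ K)
    (x : ℝ) :
    |u a x| ≤ (1 + 2 * K) / √(b - a) + 2 * γ * S * (b - a) := by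
  have hlen := sub_pos.2 hlt
  refine (h.abs_left_le hS hlt (fun x => (abs_antideriv_le (h.integrable a) x).trans hK)
    (Real.sqrt_pos.2 hlen) x).trans_eq ?_
  rw [Real.sqrt_div_self']
  ring

lemma exists_bound_mul_sqrt_le (h : IsSlabSolution γ a b u)
    (hS : ∀ t ∈ Icc a b, ∀ x, |antideriv (u t) x| ≤ S) (hlt : a < b) (hlen : b - a ≤ 1) (hK : 1 ≤ K)
    (hγK : 2 * γ * K * (b - a) ≤ 1) (hu : ∫ x, |u a x| ≤ K)
    (hv : ∫ x, antideriv (u a) x ^ 2 ≤ K) :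
    ∃ S₀, (∀ t ∈ Icc a b, ∀ x, |antideriv (u t) x| ≤ S₀) ∧ S₀ * √(b - a) ≤ 6 * K ^ 2 := by
  obtain ⟨S₀, hS₀, hsq⟩ := h.exists_bound_sq_le hS hlt
  have hS₀nonneg := h.bound_nonneg hS₀
  have := h.γ_pos
  have hl := sub_pos.2 hlt
  have hσ := Real.sqrt_pos.2 hl
  set m := (1 + 2 * K) / √(b - a) + 2 * γ * S₀ * (b - a)
  have : 0 ≤ m := by simp only [m]; positivity
  have hmσ : K * (m * √(b - a)) ≤ K * (1 + 2 * K) + S₀ * √(b - a) := by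
    have : K * (m * √(b - a)) =
        K * (1 + 2 * K) + 2 * γ * K * (b - a) * (S₀ * √(b - a)) := by
      simp only [m]
      field_simp
    rw [this]
    gcongr K * (1 + 2 * K) + ?_
    exact mul_le_of_le_one_left (by positivity) hγK
  have hQ : ∫ x, u a x ^ 2 ≤ m * K :=
    (integral_sq_le (h.integrable a) (h.abs_left_le_div_sqrt hS₀ hlt hu)).trans (by gcongr)
  refine ⟨S₀, hS₀, mul_le_of_sq_le hS₀nonneg hσ (Real.sqrt_le_one.2 hlen) hK hmσ ?_⟩
  rw [Real.sq_sqrt hl.le]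
  refine (hsq a h.left_mem).trans ?_
  gcongr

lemma abs_antideriv_and_abs_le_div_sqrt (h : IsSlabSolution γ a b u)
    (hS : ∀ t ∈ Icc a b, ∀ x, |antideriv (u t) x| ≤ S) (hlt : a < b) (hlen : b - a ≤ 1) (hK : 1 ≤ K)
    (hγK : 2 * γ * K * (b - a) ≤ 1) (hu : ∫ x, |u a x| ≤ K)
    (hv : ∫ x, antideriv (u a) x ^ 2 ≤ K) {t : ℝ} (ht : t ∈ Icc a b) (x : ℝ) :
    |antideriv (u t) x| ≤ 15 * K ^ 2 / √(b - a) ∧ |u t x| ≤ 15 * K ^ 2 / √(b - a) := by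
  obtain ⟨S₀, hS₀, hS₀le⟩ := h.exists_bound_mul_sqrt_le hS hlt hlen hK hγK hu hv
  have hl := sub_pos.2 hlt
  have hσ0 : 0 < √(b - a) := Real.sqrt_pos.2 hl
  have hS₀nonneg := h.bound_nonneg hS₀
  have hγ := h.γ_pos
  have hγl : γ * (b - a) ≤ 1 / 2 := by nlinarith [mul_pos hγ hl]
  rw [le_div_iff₀ hσ0, le_div_iff₀ hσ0]
  constructor
  · calc |antideriv (u t) x| * √(b - a) ≤ S₀ * √(b - a) := by gcongr; exact hS₀ t ht x
      _ ≤ 15 * K ^ 2 := by nlinarith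
  · have hevol : |u t x| ≤ (1 + 2 * K) / √(b - a) + 2 * γ * S₀ * (b - a) + γ * S₀ * (b - a) := by
      refine (h.abs_le_add hS₀ (h.abs_left_le_div_sqrt hS₀ hlt hu) ht x).trans ?_
      gcongr
      exact ht.2
    calc |u t x| * √(b - a)
        ≤ ((1 + 2 * K) / √(b - a) + 2 * γ * S₀ * (b - a) + γ * S₀ * (b - a)) * √(b - a) := by
          gcongr
      _ = 1 + 2 * K + 3 * (γ * (b - a)) * (S₀ * √(b - a)) := by field_simp; ring
      _ ≤ 1 + 2 * K + 3 * (1 / 2) * (6 * K ^ 2) := by gcongr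
      _ ≤ 15 * K ^ 2 := by nlinarith

lemma abs_antideriv_sub_le (h : IsSlabSolution γ a b u) (hlt : a < b) (hlen : b - a ≤ 1)
    (hY : ∀ t ∈ Icc a b, ∀ x, |antideriv (u t) x| ≤ Y / √(b - a) ∧ |u t x| ≤ Y / √(b - a))
    {t x y : ℝ} (ht : t ∈ Icc a b) (hxy : |y - x| ≤ 1) :
    |antideriv (u t) y - antideriv (u t) x| ≤
      |antideriv (u a) y - antideriv (u a) x| + γ * Y + Y ^ 2 := by
  have hl := sub_pos.2 hlt
  have hσ0 : 0 < √(b - a) := Real.sqrt_pos.2 hl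
  have hσ1 : √(b - a) ≤ 1 := Real.sqrt_le_one.2 hlen
  have hγ := h.γ_pos
  have hY0 : 0 ≤ Y / √(b - a) := (abs_nonneg _).trans (hY t ht x).1
  have hrate (s) (hs : s ∈ Icc a b) :
      |γ * (∫ z in x..y, antideriv (u s) z) - (u s y ^ 2 - u s x ^ 2) / 2| ≤
        γ * (Y / √(b - a)) + (Y / √(b - a)) ^ 2 := by
    have hforce : |∫ z in x..y, antideriv (u s) z| ≤ Y / √(b - a) :=
      (norm_integral_le_of_norm_le_const (f := antideriv (u s)) fun z _ => (hY s hs z).1).trans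
        (mul_le_of_le_one_right hY0 hxy)
    have hsq (z : ℝ) : |u s z ^ 2| ≤ (Y / √(b - a)) ^ 2 := by
      rw [abs_pow]
      exact pow_le_pow_left₀ (abs_nonneg _) (hY s hs z).2 2
    refine (abs_sub _ _).trans (add_le_add ?_ ?_)
    · rw [abs_mul, abs_of_pos hγ]
      gcongr
    · rw [abs_div, abs_two, div_le_iff₀ two_pos]
      linarith [abs_sub_le_two_mul hsq y x]
  have hmean := (convex_Icc a b).norm_image_sub_le_of_norm_hasDerivWithin_le
    (fun s hs => h.hasDerivWithinAt_antideriv_sub x y hs) hrate h.left_mem ht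
  rw [Real.norm_eq_abs, Real.norm_eq_abs, abs_of_nonneg (sub_nonneg.2 ht.1)] at hmean
  have hincrement : (γ * (Y / √(b - a)) + (Y / √(b - a)) ^ 2) * (t - a) ≤ γ * Y + Y ^ 2 :=
    calc (γ * (Y / √(b - a)) + (Y / √(b - a)) ^ 2) * (t - a)
        ≤ (γ * (Y / √(b - a)) + (Y / √(b - a)) ^ 2) * (b - a) := by gcongr; exact ht.2
      _ = γ * Y * √(b - a) + Y ^ 2 := by
          nth_rw 3 [← Real.sq_sqrt hl.le]
          field_simp
      _ ≤ γ * Y + Y ^ 2 := by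
          have : 0 ≤ Y := by simpa [hσ0.ne'] using mul_nonneg hY0 hσ0.le
          gcongr ?_ + Y ^ 2
          exact mul_le_of_le_one_right (by positivity) hσ1
  linarith [abs_sub_abs_le_abs_sub (antideriv (u t) y - antideriv (u t) x)
    (antideriv (u a) y - antideriv (u a) x)]

lemma abs_antideriv_le_of_le_div_sqrt (h : IsSlabSolution γ a b u) (hlt : a < b)
    (hlen : b - a ≤ 1)
    (hY : ∀ t ∈ Icc a b, ∀ x, |antideriv (u t) x| ≤ Y / √(b - a) ∧ |u t x| ≤ Y / √(b - a))
    (hu : ∫ x, |u a x| ≤ K) (hv : ∫ x, antideriv (u a) x ^ 2 ≤ K) {t : ℝ} (ht : t ∈ Icc a b)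
    (x : ℝ) : |antideriv (u t) x| ≤ 1 + 3 * K + γ * Y + (1 + K) * Y ^ 2 := by
  have hl := sub_pos.2 hlt
  have : 0 < √(b - a) := Real.sqrt_pos.2 hl
  have hS (s) (hs : s ∈ Icc a b) (y) := (hY s hs y).1
  have hY0 := h.bound_nonneg hS
  have hQ : ∫ x, u a x ^ 2 ≤ Y / √(b - a) * K :=
    (integral_sq_le (h.integrable a) fun x => (hY a h.left_mem x).2).trans (by gcongr)
  have hN : ∫ x, antideriv (u t) x ^ 2 ≤ K + K * Y ^ 2 :=
    calc ∫ x, antideriv (u t) x ^ 2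
        ≤ (∫ x, antideriv (u a) x ^ 2) + Y / √(b - a) * (∫ x, u a x ^ 2) * (b - a) :=
          h.integral_antideriv_sq_le hS h.left_mem ht
      _ ≤ K + Y / √(b - a) * (Y / √(b - a) * K) * (b - a) := by gcongr
      _ = K + K * Y ^ 2 := by
          rw [mul_left_comm, ← mul_assoc (Y / _), ← sq, div_pow, Real.sq_sqrt hl.le]
          field_simp
  obtain ⟨y, ⟨hxy, hyx⟩, hy⟩ :=
    exists_mem_Icc_le_integral (h.integrable_antideriv_sq t) (fun x => sq_nonneg _) x
  have hvy : |antideriv (u t) y| ≤ 1 + (K + K * Y ^ 2) := by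
    have hK : 0 ≤ K := (integral_nonneg fun x => abs_nonneg _).trans hu
    refine abs_le_of_sq_le_sq ((hy.trans hN).trans ?_) (by positivity)
    nlinarith [mul_nonneg hK (sq_nonneg Y)]
  have hleft : |antideriv (u a) x - antideriv (u a) y| ≤ 2 * K :=
    abs_sub_le_two_mul (fun z => (abs_antideriv_le (h.integrable a) z).trans hu) x y
  have hdiff := h.abs_antideriv_sub_le hlt hlen hY ht (x := y) (y := x)
    (abs_le.2 ⟨by linarith, by linarith⟩)
  linarith [abs_sub_abs_le_abs_sub (antideriv (u t) x) (antideriv (u t) y)]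

lemma abs_antideriv_le_of_integral_le (h : IsSlabSolution γ a b u)
    (hS : ∀ t ∈ Icc a b, ∀ x, |antideriv (u t) x| ≤ S) (hlt : a < b) (hlen : b - a ≤ 1) (hK : 1 ≤ K)
    (hγK : 2 * γ * K * (b - a) ≤ 1) (hu : ∫ x, |u a x| ≤ K)
    (hv : ∫ x, antideriv (u a) x ^ 2 ≤ K) {t : ℝ} (ht : t ∈ Icc a b) (x : ℝ) :
    |antideriv (u t) x| ≤ shortSlabBound γ K :=
  h.abs_antideriv_le_of_le_div_sqrt hlt hlen
    (fun _ hs y => h.abs_antideriv_and_abs_le_div_sqrt hS hlt hlen hK hγK hu hv hs y) hu hv ht x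

end ShortTime

end IsSlabSolution

/-- The material derivative `u_t + u u_x`, which the equation equates to `γ v`. -/
noncomputable def materialDeriv (u : ℝ → ℝ → ℝ) (t x : ℝ) : ℝ :=
  deriv (fun s => u s x) t + u t x * deriv (u t) x

/-- A continuously differentiable solution of the Ostrovsky–Hunter equation on `[0, T) × ℝ` whose
primitive `v(t, ·)` is square integrable at every time. The fields are those of `IsLineOHSolution`
without second derivatives; in particular the equation is not imposed at time `0`. -/
structure IsFiniteEnergySolution (γ T : ℝ) (u : ℝ → ℝ → ℝ) : Prop where
  γ_pos : 0 < γ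
  diff_t : ∀ t ∈ Ico 0 T, ∀ x, DifferentiableAt ℝ (fun s => u s x) t
  diff_x : ∀ t ∈ Ico 0 T, Differentiable ℝ (u t)
  cont_u : ContinuousOn (fun p : ℝ × ℝ => u p.1 p.2) (Ico 0 T ×ˢ univ)
  cont_ut : ContinuousOn (fun p : ℝ × ℝ => deriv (fun s => u s p.2) p.1) (Ico 0 T ×ˢ univ)
  cont_ux : ContinuousOn (fun p : ℝ × ℝ => deriv (u p.1) p.2) (Ico 0 T ×ˢ univ)
  integrable : ∀ t ∈ Ico 0 T, Integrable (u t)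
  integrable_antideriv_sq : ∀ t ∈ Ico 0 T, Integrable fun x => antideriv (u t) x ^ 2
  eqn : ∀ t ∈ Ico 0 T, 0 < t → ∀ x, materialDeriv u t x = γ * antideriv (u t) x

lemma IsLineOHSolution.isFiniteEnergySolution {γ T : ℝ} {u : ℝ → ℝ → ℝ}
    (h : IsLineOHSolution γ (Ico 0 T) u) (hγ : 0 < γ)
    (hv : ∀ t ∈ Ico 0 T, Integrable fun x => antideriv (u t) x ^ 2) :
    IsFiniteEnergySolution γ T u :=
  { h with
    γ_pos := hγ
    integrable_antideriv_sq := hv }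

namespace IsFiniteEnergySolution

variable {γ T a b : ℝ} {u : ℝ → ℝ → ℝ}

lemma continuousOn_materialDeriv (h : IsFiniteEnergySolution γ T u) :
    ContinuousOn (fun p : ℝ × ℝ => materialDeriv u p.1 p.2) (Ico 0 T ×ˢ univ) :=
  h.cont_ut.add (h.cont_u.mul h.cont_ux)

lemma continuousOn_antideriv (h : IsFiniteEnergySolution γ T u) {I : Set ℝ} (hI : I ⊆ Ico 0 T)
    (heq : ∀ t ∈ I, ∀ x, materialDeriv u t x = γ * antideriv (u t) x) :
    ContinuousOn (fun p : ℝ × ℝ => antideriv (u p.1) p.2) (I ×ˢ univ) :=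
  ((h.continuousOn_materialDeriv.mono (prod_mono hI subset_rfl)).div_const γ).congr fun p hp => by
    simp only [heq p.1 hp.1 p.2, mul_div_cancel_left₀ _ h.γ_pos.ne']

lemma exists_slab_extension (h : IsFiniteEnergySolution γ T u) (ha : 0 ≤ a) (hab : a ≤ b)
    (hb : b < T) (heq : ∀ t ∈ Icc a b, ∀ x, materialDeriv u t x = γ * antideriv (u t) x) :
    ∃ U, IsSlabSolution γ a b U ∧ ∀ t ∈ Icc a b, U t = u t := by
  have hI : Icc a b ⊆ Ico 0 T := fun t ht => ⟨ha.trans ht.1, ht.2.trans_lt hb⟩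
  have hmem (t : ℝ) : (projIcc a b hab t : ℝ) ∈ Ico 0 T := hI (projIcc a b hab t).2
  have hcomp {g : ℝ × ℝ → ℝ} (hg : ContinuousOn g (Icc a b ×ˢ univ)) :
      Continuous fun p : ℝ × ℝ => g (projIcc a b hab p.1, p.2) :=
    hg.comp_continuous (by fun_prop) fun p => ⟨(projIcc a b hab p.1).2, mem_univ _⟩
  have hsub : Icc a b ×ˢ (univ : Set ℝ) ⊆ Ico 0 T ×ˢ univ := prod_mono hI subset_rfl
  have hfrozen {t : ℝ} (ht : t ∈ Icc a b) : u (projIcc a b hab t) = u t := by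
    rw [projIcc_of_mem hab ht]
  refine ⟨fun t => u (projIcc a b hab t), ?_, fun t ht => hfrozen ht⟩
  exact {
    γ_pos := h.γ_pos
    le := hab
    continuous := hcomp (h.cont_u.mono hsub)
    continuous_deriv := hcomp (h.cont_ux.mono hsub)
    continuous_antideriv := hcomp (h.continuousOn_antideriv hI heq)
    differentiable := fun t => h.diff_x _ (hmem t)
    hasDerivWithinAt := fun t ht x => by
      simp only [hfrozen ht, ← heq t ht x, materialDeriv, add_sub_cancel_right]
      exact (h.diff_t t (hI ht) x).hasDerivAt.hasDerivWithinAt.congr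
        (fun s hs => by rw [hfrozen hs]) (by rw [hfrozen ht])
    integrable := fun t => h.integrable _ (hmem t)
    integrable_antideriv_sq := fun t => h.integrable_antideriv_sq _ (hmem t) }

lemma exists_slab_extension_of_pos (h : IsFiniteEnergySolution γ T u) (ha : 0 < a) (hab : a ≤ b)
    (hb : b < T) : ∃ U, IsSlabSolution γ a b U ∧ ∀ t ∈ Icc a b, U t = u t :=
  h.exists_slab_extension ha.le hab hb fun t ht =>
    h.eqn t ⟨ha.le.trans ht.1, ht.2.trans_lt hb⟩ (ha.trans_le ht.1)

end IsFiniteEnergySolution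

section BaireCategory

lemma isClosed_setOf_integral_le {X : Type*} [TopologicalSpace X]
    {f : X → ℝ → ℝ} (hf : Continuous (Function.uncurry f)) (hpos : ∀ t x, 0 ≤ f t x)
    (hint : ∀ t, Integrable (f t)) (c : ℝ) : IsClosed {t | ∫ x, f t x ≤ c} := by
  have heq : {t | ∫ x, f t x ≤ c} = ⋂ n : ℕ, {t | ∫ x in -(n : ℝ)..n, f t x ≤ c} := by
    ext t
    rw [mem_iInter]
    refine ⟨fun ht n => ?_, fun ht => ?_⟩
    · rw [mem_ofPred_eq, integral_of_le (neg_le_self n.cast_nonneg)]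
      exact (setIntegral_le_integral (hint t) (Eventually.of_forall (hpos t))).trans ht
    · have hn : Tendsto (fun n : ℕ => (n : ℝ)) atTop atTop := tendsto_natCast_atTop_atTop
      exact le_of_tendsto' (intervalIntegral_tendsto_integral (hint t)
        (tendsto_neg_atTop_atBot.comp hn) hn) ht
  rw [heq]
  exact isClosed_iInter fun n => isClosed_le
    (continuous_parametric_intervalIntegral_of_continuous' hf _ _) continuous_const

/-- The primitive `v` of `u` is bounded on `J × ℝ` for some neighbourhood `J` of the time `t`. -/
def LocallyBoundedAt (u : ℝ → ℝ → ℝ) (t : ℝ) : Prop :=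
  ∃ S, ∀ᶠ r in nhds t, ∀ x, |antideriv (u r) x| ≤ S

variable {u : ℝ → ℝ → ℝ}

lemma isOpen_setOf_locallyBoundedAt : IsOpen {t | LocallyBoundedAt u t} :=
  isOpen_iff_eventually.2 fun _ ⟨S, hS⟩ =>
    (eventually_eventually_nhds.2 hS).mono fun _ hr => ⟨S, hr⟩

lemma exists_abs_antideriv_le_of_forall_locallyBoundedAt {K : Set ℝ} (hK : IsCompact K)
    (hu : ∀ t ∈ K, LocallyBoundedAt u t) : ∃ S, ∀ t ∈ K, ∀ x, |antideriv (u t) x| ≤ S := by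
  refine hK.induction_on (p := fun s => ∃ S, ∀ t ∈ s, ∀ x, |antideriv (u t) x| ≤ S)
    ⟨0, by simp⟩ (fun s t hst ⟨S, hS⟩ => ⟨S, fun r hr => hS r (hst hr)⟩) ?_ fun t ht => ?_
  · rintro s t ⟨S, hS⟩ ⟨S', hS'⟩
    refine ⟨max S S', ?_⟩
    rintro r (hr | hr) x
    · exact (hS r hr x).trans (le_max_left _ _)
    · exact (hS' r hr x).trans (le_max_right _ _)
  · obtain ⟨S, hS⟩ := hu t ht
    exact ⟨_, mem_nhdsWithin_of_mem_nhds hS, S, fun r hr => hr⟩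

namespace IsFiniteEnergySolution

variable {γ T a b K : ℝ}

lemma exists_abs_antideriv_le (h : IsFiniteEnergySolution γ T u) (ha : 0 ≤ a) (hab : a < b)
    (hb : b ≤ T) (hu : ∀ t ∈ Ioo a b, LocallyBoundedAt u t) :
    ∃ S, ∀ t ∈ Ioo a b, ∀ x, |antideriv (u t) x| ≤ S := by
  obtain ⟨s, has, hsb⟩ := exists_between hab
  refine ⟨1 + ((∫ x, antideriv (u s) x ^ 2) + ∫ x, u s x ^ 2) / 2 +
    (∫ x, u s x ^ 2) * (b - a) / 2, fun t ht x => ?_⟩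
  obtain ⟨d, hd, hdb⟩ := exists_between (max_lt hsb ht.2)
  obtain ⟨c, hac, hc⟩ := exists_between (lt_min has ht.1)
  rw [max_lt_iff] at hd
  rw [lt_min_iff] at hc
  have hcd : c < d := hc.1.trans hd.1
  obtain ⟨S, hS⟩ := exists_abs_antideriv_le_of_forall_locallyBoundedAt (u := u) isCompact_Icc
    fun r (hr : r ∈ Icc c d) => hu r ⟨hac.trans_le hr.1, hr.2.trans_lt hdb⟩
  obtain ⟨U, hU, hUu⟩ :=
    h.exists_slab_extension_of_pos (ha.trans_lt hac) hcd.le (hdb.trans_le hb)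
  have hs : s ∈ Icc c d := ⟨hc.1.le, hd.1.le⟩
  have ht' : t ∈ Icc c d := ⟨hc.2.le, hd.2.le⟩
  have hbound := hU.abs_antideriv_le_of_energy (fun r hr => by simpa only [hUu r hr] using hS r hr)
    hcd hs ht' x
  rw [hUu s hs, hUu t ht'] at hbound
  have : 0 ≤ ∫ x, u s x ^ 2 := integral_nonneg fun x => sq_nonneg _
  have hlen : (∫ x, u s x ^ 2) * (d - c) ≤ (∫ x, u s x ^ 2) * (b - a) := by gcongr
  linarith

lemma abs_antideriv_le_shortSlabBound (h : IsFiniteEnergySolution γ T u) (ha : 0 < a) (hab : a < b)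
    (hb : b < T) (hu : ∀ t ∈ Ioo a b, LocallyBoundedAt u t) (hlen : b - a ≤ 1) (hK : 1 ≤ K)
    (hγK : 2 * γ * K * (b - a) ≤ 1) (hK₁ : ∫ x, |u a x| ≤ K)
    (hK₂ : ∫ x, antideriv (u a) x ^ 2 ≤ K) (x : ℝ) :
    |antideriv (u b) x| ≤ shortSlabBound γ K := by
  obtain ⟨S, hS⟩ := h.exists_abs_antideriv_le ha.le hab hb.le hu
  obtain ⟨U, hU, hUu⟩ := h.exists_slab_extension_of_pos ha hab.le hb
  have hUS (t) (ht : t ∈ Icc a b) (y) :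
      |antideriv (U t) y| ≤ max S (max (∫ z, |U a z|) (∫ z, |U b z|)) := by
    rcases ht.1.eq_or_lt with rfl | hat
    · exact (abs_antideriv_le (hU.integrable _) y).trans (by simp)
    rcases ht.2.eq_or_lt with rfl | htb
    · exact (abs_antideriv_le (hU.integrable _) y).trans (by simp)
    · rw [hUu t ht]
      exact (hS t ⟨hat, htb⟩ y).trans (le_max_left _ _)
  rw [← hUu b hU.right_mem]
  rw [← hUu a hU.left_mem] at hK₁ hK₂
  exact hU.abs_antideriv_le_of_integral_le hUS hab hlen hK hγK hK₁ hK₂ hU.right_mem x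

lemma isClosed_setOf_integral_abs_le_and_integral_sq_le (h : IsFiniteEnergySolution γ T u)
    {I : Set ℝ} (hI : I ⊆ Ioo 0 T) (c : ℝ) :
    IsClosed {t : I | ∫ x, |u t x| ≤ c ∧ ∫ x, antideriv (u t) x ^ 2 ≤ c} := by
  have hI' : I ⊆ Ico 0 T := hI.trans Ioo_subset_Ico_self
  have hcomp {g : ℝ × ℝ → ℝ} (hg : ContinuousOn g (I ×ˢ univ)) :
      Continuous fun p : I × ℝ => g (p.1, p.2) :=
    hg.comp_continuous (by fun_prop) fun p => ⟨p.1.2, mem_univ _⟩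
  have hu : Continuous fun p : I × ℝ => |u p.1 p.2| :=
    (hcomp (h.cont_u.mono (prod_mono hI' subset_rfl))).abs
  have hv : Continuous fun p : I × ℝ => antideriv (u p.1) p.2 ^ 2 :=
    (hcomp (h.continuousOn_antideriv hI' fun t ht => h.eqn t (hI' ht) (hI ht).1)).fun_pow 2
  exact (isClosed_setOf_integral_le (f := fun (t : I) x => |u t x|) hu
      (fun _ _ => abs_nonneg _) (fun t => (h.integrable t (hI' t.2)).abs) c).inter
    (isClosed_setOf_integral_le (f := fun (t : I) x => antideriv (u t) x ^ 2) hv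
      (fun _ _ => sq_nonneg _) (fun t => h.integrable_antideriv_sq t (hI' t.2)) c)

-- Baire's theorem on the set of bad times, which is locally closed and covered by the closed
-- sublevel sets of the integrals of `|u|` and `v²`.
lemma exists_integral_le_near_bad_time (h : IsFiniteEnergySolution γ T u) {p : ℝ}
    (hp : p ∈ Ioo 0 T) (hbad : ¬ LocallyBoundedAt u p) :
    ∃ K ≥ 1, ∃ q ∈ Ioo 0 T, ¬ LocallyBoundedAt u q ∧ ∀ᶠ r in nhds q, ¬ LocallyBoundedAt u r →
      ∫ x, |u r x| ≤ K ∧ ∫ x, antideriv (u r) x ^ 2 ≤ K := by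
  set Z : Set ℝ := {t | LocallyBoundedAt u t}ᶜ ∩ Ioo 0 T
  have hZ : IsLocallyClosed Z :=
    isOpen_setOf_locallyBoundedAt.isClosed_compl.isLocallyClosed.inter isOpen_Ioo.isLocallyClosed
  have : LocallyCompactSpace Z := hZ.locallyCompactSpace
  have : Nonempty Z := ⟨⟨p, hbad, hp⟩⟩
  obtain ⟨n, q, hq⟩ := nonempty_interior_of_iUnion_of_closed
    (fun n : ℕ => h.isClosed_setOf_integral_abs_le_and_integral_sq_le
      (I := Z) inter_subset_right n)
    (iUnion_eq_univ_iff.2 fun t => (exists_nat_ge (max (∫ x, |u t x|) _)).imp fun _ => max_le_iff.1)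
  refine ⟨max 1 n, le_max_left _ _, q, q.2.2, q.2.1, ?_⟩
  obtain ⟨O, hO, hOn⟩ := (mem_nhds_subtype _ _ _).1 (mem_interior_iff_mem_nhds.1 hq)
  filter_upwards [hO, isOpen_Ioo.mem_nhds q.2.2] with r hr hrT hrbad
  have hrn : ∫ x, |u r x| ≤ n ∧ ∫ x, antideriv (u r) x ^ 2 ≤ n := @hOn ⟨r, hrbad, hrT⟩ hr
  exact hrn.imp le_max_of_le_right le_max_of_le_right

lemma exists_short_interval_near_bad_time (h : IsFiniteEnergySolution γ T u) {p : ℝ}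
    (hp : p ∈ Ioo 0 T) (hbad : ¬ LocallyBoundedAt u p) :
    ∃ K ≥ 1, ∃ q, ¬ LocallyBoundedAt u q ∧ ∃ a b, 0 < a ∧ q ∈ Ioo a b ∧ b < T ∧ b - a ≤ 1 ∧
      2 * γ * K * (b - a) ≤ 1 ∧ ∀ r ∈ Ioo a b, ¬ LocallyBoundedAt u r →
        ∫ x, |u r x| ≤ K ∧ ∫ x, antideriv (u r) x ^ 2 ≤ K := by
  obtain ⟨K, hK, q, hq, hqbad, hnear⟩ := h.exists_integral_le_near_bad_time hp hbad
  obtain ⟨ε, hε, hball⟩ := Metric.eventually_nhds_iff.1 (hnear.and (isOpen_Ioo.mem_nhds hq))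
  have hsmall : ∀ᶠ d in nhds (0 : ℝ), 2 * d ≤ 1 ∧ 2 * γ * K * (2 * d) ≤ 1 :=
    ((by fun_prop : Continuous fun d : ℝ => 2 * d).tendsto' 0 0 (by simp)
      |>.eventually_le_const one_pos).and
    ((by fun_prop : Continuous fun d : ℝ => 2 * γ * K * (2 * d)).tendsto' 0 0 (by simp)
      |>.eventually_le_const one_pos)
  obtain ⟨d, ⟨hlen, hγK⟩, hd, hdε⟩ :=
    ((hsmall.filter_mono nhdsWithin_le_nhds).and (Ioo_mem_nhdsGT hε)).exists
  have hI (r) (hr : r ∈ Icc (q - d) (q + d)) := @hball r (by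
    rw [Real.dist_eq, abs_lt]
    constructor <;> linarith [hr.1, hr.2])
  have hwidth : q + d - (q - d) = 2 * d := by ring
  refine ⟨K, hK, q, hqbad, q - d, q + d, (hI _ ⟨le_rfl, by linarith⟩).2.1,
    ⟨by linarith, by linarith⟩, (hI _ ⟨by linarith, le_rfl⟩).2.2, ?_, ?_,
    fun r hr => (hI r (Ioo_subset_Icc_self hr)).1⟩ <;> rwa [hwidth]

-- Between `t` and the last bad time before it `v` is locally bounded, so the short-time bound
-- applies there.
lemma abs_antideriv_le_after_bad_time (h : IsFiniteEnergySolution γ T u) (ha : 0 ≤ a) (hb : b ≤ T)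
    (hlen : b - a ≤ 1) (hK : 1 ≤ K) (hγK : 2 * γ * K * (b - a) ≤ 1)
    (hbad : ∀ r ∈ Ioo a b, ¬ LocallyBoundedAt u r →
      ∫ x, |u r x| ≤ K ∧ ∫ x, antideriv (u r) x ^ 2 ≤ K)
    {p t : ℝ} (hp : ¬ LocallyBoundedAt u p) (hap : a < p) (hpt : p ≤ t) (htb : t < b) (x : ℝ) :
    |antideriv (u t) x| ≤ max K (shortSlabBound γ K) := by
  have hcompact : IsCompact ({r | LocallyBoundedAt u r}ᶜ ∩ Icc p t) :=
    isCompact_Icc.inter_left isOpen_setOf_locallyBoundedAt.isClosed_compl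
  obtain ⟨s, ⟨hs, hps, hst⟩, hlast⟩ := hcompact.exists_isGreatest ⟨p, hp, le_rfl, hpt⟩
  have has : a < s := hap.trans_le hps
  obtain ⟨hK₁, hK₂⟩ := hbad s ⟨has, hst.trans_lt htb⟩ hs
  rcases hst.eq_or_lt with rfl | hst
  · exact ((abs_antideriv_le (h.integrable s ⟨ha.trans has.le, htb.trans_le hb⟩) x).trans
      hK₁).trans (le_max_left _ _)
  have hgood (r) (hr : r ∈ Ioo s t) : LocallyBoundedAt u r := by
    by_contra hrbad
    exact hr.1.not_ge (hlast ⟨hrbad, hps.trans hr.1.le, hr.2.le⟩)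
  have hγ := h.γ_pos
  have hγK' : 2 * γ * K * (t - s) ≤ 2 * γ * K * (b - a) := by gcongr
  exact (h.abs_antideriv_le_shortSlabBound (ha.trans_lt has) hst (htb.trans_le hb) hgood
    (by linarith) hK (hγK'.trans hγK) hK₁ hK₂ x).trans (le_max_right _ _)

lemma locallyBoundedAt (h : IsFiniteEnergySolution γ T u) {p : ℝ} (hp : p ∈ Ioo 0 T) :
    LocallyBoundedAt u p := by
  by_contra hpbad
  obtain ⟨K, hK, q, hqbad, a, b, ha, hq, hb, hlen, hγK, hbad⟩ :=
    h.exists_short_interval_near_bad_time hp hpbad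
  have hafter {p : ℝ} (hp : ¬ LocallyBoundedAt u p) (hap : a < p) {r : ℝ} (hr : r ∈ Ico p b) :
      ∀ x, |antideriv (u r) x| ≤ max K (shortSlabBound γ K) :=
    h.abs_antideriv_le_after_bad_time ha.le hb.le hlen hK hγK hbad hp hap hr.1 hr.2
  obtain ⟨S, p', hp'q, hS⟩ : ∃ S, ∃ p' < q, ∀ r ∈ Ioo p' q, ∀ x, |antideriv (u r) x| ≤ S := by
    by_cases hex : ∃ p ∈ Ioo a q, ¬ LocallyBoundedAt u p
    · obtain ⟨p, hpq, hpbad⟩ := hex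
      exact ⟨_, p, hpq.2, fun r hr => hafter hpbad hpq.1 ⟨hr.1.le, hr.2.trans hq.2⟩⟩
    · push Not at hex
      obtain ⟨S, hS⟩ := h.exists_abs_antideriv_le ha.le hq.1 (hq.2.trans hb).le hex
      exact ⟨S, a, hq.1, hS⟩
  refine hqbad ⟨max S (max K (shortSlabBound γ K)), ?_⟩
  filter_upwards [Ioo_mem_nhds hp'q hq.2] with r hr x
  rcases lt_or_ge r q with hrq | hqr
  · exact (hS r ⟨hr.1, hrq⟩ x).trans (le_max_left _ _)
  · exact (hafter hqbad hq.1 ⟨hqr, hr.2⟩ x).trans (le_max_right _ _)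

end IsFiniteEnergySolution

end BaireCategory

section InitialTime

lemma eq_of_sub_eq_sub_of_integrable_sq {f g : ℝ → ℝ} (hf : AEStronglyMeasurable f)
    (hg : AEStronglyMeasurable g) (hf2 : Integrable fun x => f x ^ 2)
    (hg2 : Integrable fun x => g x ^ 2) (hfg : ∀ x y, f y - f x = g y - g x) : f = g := by
  have hconst : f - g = fun _ => f 0 - g 0 := funext fun x => by
    rw [Pi.sub_apply]
    linarith [hfg 0 x]
  have hmem : MemLp (f - g) 2 :=
    ((memLp_two_iff_integrable_sq hf).2 hf2).sub ((memLp_two_iff_integrable_sq hg).2 hg2)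
  rw [hconst, memLp_const_iff two_ne_zero ENNReal.ofNat_ne_top, Real.volume_univ] at hmem
  rw [hmem.resolve_right (lt_irrefl _)] at hconst
  exact sub_eq_zero.1 hconst

lemma continuousOn_intervalIntegral_of_continuousOn_prod {X : Type*} [TopologicalSpace X]
    {s : Set X} {f : X → ℝ → ℝ} (hf : ContinuousOn (fun p : X × ℝ => f p.1 p.2) (s ×ˢ univ))
    (y z : ℝ) : ContinuousOn (fun t => ∫ x in y..z, f t x) s :=
  continuousOn_iff_continuous_domRestrict.2 <|
    continuous_parametric_intervalIntegral_of_continuous' (f := fun (t : s) x => f t x)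
      (hf.comp_continuous (f := fun p : s × ℝ => ((p.1 : X), p.2)) (by fun_prop)
        fun p => ⟨p.1.2, mem_univ _⟩) y z

namespace IsFiniteEnergySolution

variable {γ T b : ℝ} {u : ℝ → ℝ → ℝ}

lemma continuousOn_materialDeriv_left (h : IsFiniteEnergySolution γ T u) (x : ℝ) :
    ContinuousOn (fun t => materialDeriv u t x) (Ico 0 T) :=
  h.continuousOn_materialDeriv.comp (f := fun t => (t, x)) (by fun_prop) fun _ ht =>
    ⟨ht, mem_univ _⟩

lemma materialDeriv_sub (h : IsFiniteEnergySolution γ T u) {t : ℝ} (ht : t ∈ Ico 0 T) (y z : ℝ) :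
    materialDeriv u t z - materialDeriv u t y = γ * ∫ x in y..z, u t x := by
  have heq : EqOn (fun t => materialDeriv u t z - materialDeriv u t y)
      (fun t => γ * ∫ x in y..z, u t x) (Ioo 0 T) := fun t ht => by
    have ht' : t ∈ Ico 0 T := Ioo_subset_Ico_self ht
    simp only [h.eqn t ht' ht.1, ← antideriv_sub_antideriv (h.integrable t ht'), mul_sub]
  refine heq.of_subset_closure
    ((h.continuousOn_materialDeriv_left z).sub (h.continuousOn_materialDeriv_left y))
    (continuousOn_const.mul (continuousOn_intervalIntegral_of_continuousOn_prod h.cont_u y z))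
    Ioo_subset_Ico_self ?_ ht
  rw [closure_Ioo (ht.1.trans_lt ht.2).ne]
  exact Ico_subset_Icc_self

lemma exists_integral_antideriv_sq_le (h : IsFiniteEnergySolution γ T u) (hb : b ∈ Ioo 0 T) :
    ∃ N, ∀ t ∈ Ioc 0 b, ∫ x, antideriv (u t) x ^ 2 ≤ N := by
  obtain ⟨S, hS⟩ := h.exists_abs_antideriv_le le_rfl (hb.1.trans hb.2) le_rfl
    fun t ht => h.locallyBoundedAt ht
  refine ⟨(∫ x, antideriv (u b) x ^ 2) + S * (∫ x, u b x ^ 2) * b, fun t ht => ?_⟩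
  obtain ⟨U, hU, hUu⟩ := h.exists_slab_extension_of_pos ht.1 ht.2 hb.2
  have hUS (s) (hs : s ∈ Icc t b) (x) : |antideriv (U s) x| ≤ S := by
    rw [hUu s hs]
    exact hS s ⟨ht.1.trans_le hs.1, hs.2.trans_lt hb.2⟩ x
  have hbound := hU.integral_antideriv_sq_le hUS hU.right_mem hU.left_mem
  rw [← hU.integral_sq_eq_left hUS hU.right_mem, hUu b hU.right_mem, hUu t hU.left_mem] at hbound
  refine hbound.trans ?_
  have : 0 ≤ S := hU.bound_nonneg hUS
  have : 0 ≤ ∫ x, u b x ^ 2 := integral_nonneg fun x => sq_nonneg _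
  gcongr
  linarith [ht.1]

-- Fatou's lemma, since `u_t + u u_x = γ v` is bounded in `L²` as `t → 0`.
lemma integrable_materialDeriv_zero_sq (h : IsFiniteEnergySolution γ T u) (hT : 0 < T) :
    Integrable fun x => materialDeriv u 0 x ^ 2 := by
  obtain ⟨b, hb⟩ := exists_between hT
  obtain ⟨N, hN⟩ := h.exists_integral_antideriv_sq_le hb
  obtain ⟨τ, -, hτ, hτ0⟩ := exists_seq_strictAnti_tendsto' hb.1
  have hmem (n : ℕ) : τ n ∈ Ico 0 T := ⟨(hτ n).1.le, (hτ n).2.trans hb.2⟩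
  have heq (n : ℕ) : (fun x => materialDeriv u (τ n) x ^ 2) =
      fun x => γ ^ 2 * antideriv (u (τ n)) x ^ 2 := by
    simp only [h.eqn _ (hmem n) (hτ n).1, mul_pow]
  have hint (n : ℕ) : Integrable fun x => materialDeriv u (τ n) x ^ 2 := by
    rw [heq]
    exact (h.integrable_antideriv_sq _ (hmem n)).const_mul _
  have hle (n : ℕ) : ∫⁻ x, ‖materialDeriv u (τ n) x ^ 2‖ₑ ≤ ENNReal.ofReal (γ ^ 2 * N) := by
    rw [← ofReal_integral_norm_eq_lintegral_enorm (hint n)]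
    simp only [norm_pow, sq_abs, Real.norm_eq_abs, heq n]
    rw [MeasureTheory.integral_const_mul]
    gcongr
    exact hN _ ⟨(hτ n).1, (hτ n).2.le⟩
  have hlim (x : ℝ) : Tendsto (fun n => materialDeriv u (τ n) x ^ 2) atTop
      (nhds (materialDeriv u 0 x ^ 2)) :=
    (((h.continuousOn_materialDeriv_left x 0 ⟨le_rfl, hT⟩).tendsto).comp
      (tendsto_nhdsWithin_iff.2 ⟨hτ0, Eventually.of_forall hmem⟩)).pow 2
  exact integrable_of_tendsto (Eventually.of_forall hlim)
    (fun n => (hint n).aestronglyMeasurable)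
    (ne_top_of_le_ne_top ENNReal.ofReal_ne_top
      (liminf_le_of_frequently_le' (Eventually.of_forall hle).frequently))

-- At time `0` both sides have the same increments and are square integrable.
lemma materialDeriv_eq (h : IsFiniteEnergySolution γ T u) {t : ℝ} (ht : t ∈ Ico 0 T) (x : ℝ) :
    materialDeriv u t x = γ * antideriv (u t) x := by
  rcases ht.1.eq_or_lt with rfl | hpos
  · refine congrFun (eq_of_sub_eq_sub_of_integrable_sq (f := materialDeriv u 0)
      (g := fun x => γ * antideriv (u 0) x) ?_ ?_ (h.integrable_materialDeriv_zero_sq ht.2) ?_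
      fun y z => ?_) x
    · exact (h.continuousOn_materialDeriv.comp_continuous (f := fun x => ((0 : ℝ), x))
        (by fun_prop) fun x => ⟨ht, mem_univ _⟩).aestronglyMeasurable
    · exact (continuous_iff_continuousAt.2 fun x => ((hasDerivAt_antideriv (h.integrable 0 ht)
        (h.diff_x 0 ht).continuous x).const_mul γ).continuousAt).aestronglyMeasurable
    · simpa only [mul_pow] using (h.integrable_antideriv_sq 0 ht).const_mul (γ ^ 2)
    · rw [h.materialDeriv_sub ht, ← mul_sub, antideriv_sub_antideriv (h.integrable 0 ht)]
  · exact h.eqn t ht hpos x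

lemma exists_abs_antideriv_le_of_mem_Ico (h : IsFiniteEnergySolution γ T u) (hT : 0 < T) :
    ∃ S, ∀ t ∈ Ico 0 T, ∀ x, |antideriv (u t) x| ≤ S := by
  obtain ⟨S, hS⟩ := h.exists_abs_antideriv_le le_rfl hT le_rfl fun t ht => h.locallyBoundedAt ht
  refine ⟨max S (∫ x, |u 0 x|), fun t ht x => ?_⟩
  rcases ht.1.eq_or_lt with rfl | hpos
  · exact (abs_antideriv_le (h.integrable 0 ht) x).trans (le_max_right _ _)
  · exact (hS t ⟨hpos, ht.2⟩ x).trans (le_max_left _ _)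

lemma exists_slab_extension_from_zero (h : IsFiniteEnergySolution γ T u) (hb : b ∈ Ico 0 T) :
    ∃ U S, IsSlabSolution γ 0 b U ∧ (∀ t ∈ Icc 0 b, U t = u t) ∧
      ∀ t ∈ Icc 0 b, ∀ x, |antideriv (U t) x| ≤ S := by
  have hI (t) (ht : t ∈ Icc 0 b) : t ∈ Ico 0 T := ⟨ht.1, ht.2.trans_lt hb.2⟩
  obtain ⟨S, hS⟩ := h.exists_abs_antideriv_le_of_mem_Ico (hb.1.trans_lt hb.2)
  obtain ⟨U, hU, hUu⟩ := h.exists_slab_extension le_rfl hb.1 hb.2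
    fun t ht => h.materialDeriv_eq (hI t ht)
  exact ⟨U, S, hU, hUu, fun t ht x => by simpa only [hUu t ht] using hS t (hI t ht) x⟩

lemma bddAbove_range_abs (h : IsFiniteEnergySolution γ T u) (hT : 0 < T) :
    BddAbove (range fun x => |u 0 x|) := by
  obtain ⟨b, hb, hbT⟩ := exists_between hT
  obtain ⟨U, S, hU, hUu, hS⟩ := h.exists_slab_extension_from_zero ⟨hb.le, hbT⟩
  obtain ⟨M, hM⟩ := hU.exists_abs_le hS hb
  rw [← hUu 0 hU.left_mem]
  exact ⟨M, forall_mem_range.2 (hM 0 hU.left_mem)⟩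

end IsFiniteEnergySolution

end InitialTime

section SupremumEstimate

lemma neg_mul_integral_sq_le_integral_cube {f : ℝ → ℝ} {M : ℝ}
    (hf2 : Integrable fun x => f x ^ 2) (hf3 : Integrable fun x => f x ^ 3)
    (hM : ∀ x, |f x| ≤ M) : -(M * ∫ x, f x ^ 2) ≤ ∫ x, f x ^ 3 := by
  rw [← MeasureTheory.integral_const_mul, ← MeasureTheory.integral_neg]
  refine integral_mono (hf2.const_mul M).neg hf3 fun x => ?_
  nlinarith only [sq_nonneg (f x), neg_le_of_abs_le (hM x)]

/-- The conserved energy `∫ γ v² + f³ / 3` of a profile `f` with primitive `v`. -/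
noncomputable def energy (γ : ℝ) (f : ℝ → ℝ) : ℝ :=
  ∫ x, (γ * antideriv f x ^ 2 + 1 / 3 * f x ^ 3)

-- A square root growing in `m` itself, as in the hypothesis, costs only the quadratic term.
lemma le_add_of_le_add_sqrt_mul {m M γ D q l : ℝ} (hγ : 0 ≤ γ) (hq : 0 ≤ q) (hl : 0 ≤ l)
    (h : m ≤ M + √(γ / 2 * (D + q * (m - M) / 3)) * l) :
    m ≤ M + √γ / √2 * √D * l + γ * q / 6 * l ^ 2 := by
  rcases le_total m M with hmM | hMm
  · exact le_add_of_le_of_nonneg (le_add_of_le_of_nonneg hmM (by positivity)) (by positivity)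
  have hx : 0 ≤ m - M := sub_nonneg.2 hMm
  have hD : D ≤ √D ^ 2 := by
    rw [Real.sq_sqrt']
    exact le_max_left _ _
  have hsq : (m - M) ^ 2 ≤ (√γ / √2 * √D * l) ^ 2 + γ * q / 6 * l ^ 2 * (m - M) :=
    calc (m - M) ^ 2 ≤ (√(γ / 2 * (√D ^ 2 + q * (m - M) / 3)) * l) ^ 2 := by
          refine pow_le_pow_left₀ hx ((sub_le_iff_le_add'.2 h).trans ?_) 2
          gcongr
      _ = γ / 2 * (√D ^ 2 + q * (m - M) / 3) * l ^ 2 := by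
          rw [mul_pow, Real.sq_sqrt (by positivity)]
      _ = (√γ / √2 * √D * l) ^ 2 + γ * q / 6 * l ^ 2 * (m - M) := by
          rw [mul_pow, mul_pow, div_pow, Real.sq_sqrt hγ, Real.sq_sqrt two_pos.le]
          ring
  have hsum := le_add_of_sq_le_sq_add_mul (by positivity) (by positivity) hsq
  linarith

namespace IsSlabSolution

variable {γ a b S M : ℝ} {u : ℝ → ℝ → ℝ}

lemma energy_eq (h : IsSlabSolution γ a b u)
    (hS : ∀ t ∈ Icc a b, ∀ x, |antideriv (u t) x| ≤ S) (hlt : a < b) {t : ℝ} (ht : t ∈ Icc a b) :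
    energy γ (u t) = γ * (∫ x, antideriv (u t) x ^ 2) + 1 / 3 * ∫ x, u t x ^ 3 := by
  rw [energy, MeasureTheory.integral_add ((h.integrable_antideriv_sq t).const_mul γ)
    ((h.integrable_pow_succ hS hlt ht 2).const_mul _), MeasureTheory.integral_const_mul,
    MeasureTheory.integral_const_mul]

lemma energy_eq_left (h : IsSlabSolution γ a b u)
    (hS : ∀ t ∈ Icc a b, ∀ x, |antideriv (u t) x| ≤ S) {t : ℝ} (ht : t ∈ Icc a b) :
    energy γ (u t) = energy γ (u a) := by
  rcases ht.1.eq_or_lt with rfl | hat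
  · rfl
  have hslab := h.mono le_rfl ht.2 ht.1
  have hSt (s) (hs : s ∈ Icc a t) := hS s (Icc_subset_Icc_right ht.2 hs)
  rw [hslab.energy_eq hSt hat hslab.right_mem, hslab.energy_eq hSt hat hslab.left_mem]
  linear_combination γ * hslab.integral_antideriv_sq_sub hSt hat +
    1 / 3 * hslab.integral_cube_sub hSt hat

lemma mul_antideriv_sq_le (h : IsSlabSolution γ a b u)
    (hS : ∀ t ∈ Icc a b, ∀ x, |antideriv (u t) x| ≤ S) (hlt : a < b)
    {t : ℝ} (ht : t ∈ Icc a b) (hM : ∀ x, |u t x| ≤ M) (x : ℝ) :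
    (γ * antideriv (u t) x) ^ 2 ≤
      γ / 2 * (energy γ (u a) + γ * (∫ x, u a x ^ 2) + 1 / 3 * (∫ x, u a x ^ 2) * M) := by
  have hcube := neg_mul_integral_sq_le_integral_cube (h.integrable_pow_succ hS hlt ht 1)
    (h.integrable_pow_succ hS hlt ht 2) hM
  have henergy := h.energy_eq hS hlt ht
  rw [h.energy_eq_left hS ht] at henergy
  rw [h.integral_sq_eq_left hS ht] at hcube
  have hγ := h.γ_pos
  calc (γ * antideriv (u t) x) ^ 2
      ≤ γ ^ 2 * (((∫ x, antideriv (u t) x ^ 2) + ∫ x, u a x ^ 2) / 2) := by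
        rw [mul_pow]
        gcongr
        exact h.antideriv_sq_le hS hlt ht x
    _ = γ / 2 * (energy γ (u a) - 1 / 3 * (∫ x, u t x ^ 3) + γ * ∫ x, u a x ^ 2) := by
        rw [henergy]
        ring
    _ ≤ _ := mul_le_mul_of_nonneg_left (by linarith) (by positivity)

lemma abs_le_of_abs_left_le (h : IsSlabSolution γ a b u)
    (hS : ∀ t ∈ Icc a b, ∀ x, |antideriv (u t) x| ≤ S) (hlt : a < b) (hM : ∀ x, |u a x| ≤ M)
    {t : ℝ} (ht : t ∈ Icc a b) (x : ℝ) :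
    |u t x| ≤ M + √γ / √2 *
      √(energy γ (u a) + γ * (∫ x, u a x ^ 2) + 1 / 3 * (∫ x, u a x ^ 2) * M) * (b - a) +
      γ * (∫ x, u a x ^ 2) / 6 * (b - a) ^ 2 := by
  set Q := ∫ x, u a x ^ 2
  set E := energy γ (u a)
  have hbdd : BddAbove (range fun p : Icc a b × ℝ => |u p.1 p.2|) :=
    (h.exists_abs_le hS hlt).imp fun N hN => forall_mem_range.2 fun p => hN p.1 p.1.2 p.2
  set m := ⨆ p : Icc a b × ℝ, |u p.1 p.2|
  have hm (s) (hs : s ∈ Icc a b) (y) : |u s y| ≤ m := le_ciSup hbdd (⟨s, hs⟩, y)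
  have hγ := h.γ_pos
  have hv (s) (hs : s ∈ Icc a b) (y) :
      |antideriv (u s) y| ≤ √(γ / 2 * (E + γ * Q + 1 / 3 * Q * m)) / γ := by
    rw [le_div_iff₀' hγ, ← abs_of_pos hγ, ← abs_mul, abs_of_pos hγ]
    exact Real.abs_le_sqrt (h.mul_antideriv_sq_le hS hlt hs (hm s hs) y)
  have : Nonempty (Icc a b × ℝ) := ⟨⟨⟨a, h.left_mem⟩, 0⟩⟩
  refine (hm t ht x).trans (le_add_of_le_add_sqrt_mul hγ.le
    (integral_nonneg fun x => sq_nonneg _) (sub_nonneg.2 h.le) (ciSup_le fun p => ?_))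
  have hp := h.abs_le_add hv hM p.1.2 p.2
  rw [mul_div_cancel₀ _ hγ.ne'] at hp
  refine hp.trans ?_
  rw [show E + γ * Q + 1 / 3 * Q * M + Q * (m - M) / 3 = E + γ * Q + 1 / 3 * Q * m by ring]
  gcongr
  exact p.1.2.2

end IsSlabSolution

end SupremumEstimate

theorem line_sup_bound_general {γ T Q E C : ℝ} {u : ℝ → ℝ → ℝ}
    (h : IsFiniteEnergySolution γ T u) (hQ : Q = ∫ x, u 0 x ^ 2) (hE : E = energy γ (u 0))
    (hC : C = √γ / √2 * √(E + γ * Q + 1 / 3 * Q * ⨆ y, |u 0 y|)) :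
    ∀ t ∈ Ico 0 T, ∀ s ∈ Icc 0 t, ∀ x,
      |u s x| ≤ (⨆ y, |u 0 y|) + C * t + γ * Q / 6 * t ^ 2 := by
  rintro t ht s hs x
  have hu₀ (y) : |u 0 y| ≤ ⨆ y, |u 0 y| :=
    le_ciSup (h.bddAbove_range_abs (ht.1.trans_lt ht.2)) y
  rcases ht.1.eq_or_lt with rfl | hpos
  · obtain rfl : s = 0 := le_antisymm hs.2 hs.1
    simpa using hu₀ x
  · obtain ⟨U, S, hU, hUu, hS⟩ := h.exists_slab_extension_from_zero ht
    have hU0 : U 0 = u 0 := hUu 0 hU.left_mem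
    have hbound := hU.abs_le_of_abs_left_le hS hpos (hU0 ▸ hu₀) hs x
    rwa [hUu s hs, hU0, sub_zero, ← hQ, ← hE, ← hC] at hbound

/-- `sup_{s∈[0,t]} sup_x |u(s,x)| ≤ ‖u₀‖_{L∞} + C t + (γQ/6) t²` for a
decaying classical solution on the line. -/
theorem line_sup_bound
    (γ T : ℝ) (hγ : 0 < γ) (u₀ : ℝ → ℝ) (u : ℝ → ℝ → ℝ)
    (hsol : IsLineOHSolution γ (Set.Ico 0 T) u) (h0 : u 0 = u₀)
    (hu₀L1 : MeasureTheory.Integrable u₀)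
    (hu₀L2 : MeasureTheory.Integrable (fun x => (u₀ x) ^ 2))
    (hu₀Linf : BddAbove (Set.range fun x => |u₀ x|))
    (hvL2 : ∀ t ∈ Set.Ico (0 : ℝ) T,
      MeasureTheory.Integrable (fun x => (∫ y in Set.Iic x, u t y) ^ 2))
    (hvdecay : ∀ t ∈ Set.Ico (0 : ℝ) T,
      Filter.Tendsto (fun x => ∫ y in Set.Iic x, u t y) Filter.atTop (nhds 0) ∧
      Filter.Tendsto (fun x => ∫ y in Set.Iic x, u t y) Filter.atBot (nhds 0))
    (Q E C : ℝ)
    (hQ : Q = ∫ x : ℝ, (u₀ x) ^ 2)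
    (hE : E = ∫ x : ℝ, (γ * (∫ y in Set.Iic x, u₀ y) ^ 2 + (1/3) * (u₀ x) ^ 3))
    (hC : C = Real.sqrt γ / Real.sqrt 2 *
      Real.sqrt (E + γ * Q + (1/3) * Q * (⨆ y : ℝ, |u₀ y|))) :
    ∀ t ∈ Set.Ico (0 : ℝ) T, ∀ s ∈ Set.Icc (0 : ℝ) t, ∀ x : ℝ,
      |u s x| ≤ (⨆ y : ℝ, |u₀ y|) + C * t + γ * Q / 6 * t ^ 2 := by
  subst h0
  exact line_sup_bound_general (hsol.isFiniteEnergySolution hγ hvL2) hQ hE hC
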